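/- The number α₃ = √7 · ln((√7 − 1)/(√7 + 1)) has irrationality measure at most 6.64611; that is, for every real κ > 6.64611, there exist only finitely many pairs (p, q) with p ∈ ℤ and q a positive integer such that |α₃ − p/q| < q^(−κ). -/

import Mathlib

section

open MeasureTheory Filter Topology in
lemma pnt_exists_H : ∃ H : ℂ → ℂ, ContinuousOn H {s | 1 ≤ s.re} ∧
    ∀ s : ℂ, 1 < s.re → (∫ t in Set.Ioi (1 : ℝ), (Chebyshev.psi t : ℂ) * (t : ℂ) ^ (-(s + 1)))
      - 1 / (s - 1) = H s := by
  refine ⟨fun s => (ArithmeticFunction.vonMangoldt.LFunctionResidueClassAux (1 : ZMod 1) s - 1) / s,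
    ?_, ?_⟩
  · refine ((ArithmeticFunction.vonMangoldt.continuousOn_LFunctionResidueClassAux
      (1 : ZMod 1)).sub continuousOn_const).div continuousOn_id ?_
    intro s hs h
    simp only [Set.mem_ofPred_eq] at hs
    have : s = 0 := h
    rw [this] at hs
    norm_num at hs
  · intro s hs
    have h1 := ArithmeticFunction.vonMangoldt.eqOn_LFunctionResidueClassAux
      (q := 1) (a := 1) isUnit_one (x := s) hs
    simp only at h1
    beta_reduce
    rw [h1]
    have hrc : ∀ n : ℕ, ArithmeticFunction.vonMangoldt.residueClass (1 : ZMod 1) n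
        = ArithmeticFunction.vonMangoldt n := by
      intro n
      apply Set.indicator_of_mem
      exact Subsingleton.elim _ _
    simp only [hrc]
    have h2 := LSeries_eq_mul_integral_of_nonneg (fun n => ArithmeticFunction.vonMangoldt n)
      (r := 1) zero_le_one hs ?_ (fun n => ArithmeticFunction.vonMangoldt_nonneg)
    · have h3 : ∀ t : ℝ, (∑ k ∈ Finset.Icc 1 ⌊t⌋₊, ((ArithmeticFunction.vonMangoldt k : ℝ) : ℂ))
          = (Chebyshev.psi t : ℂ) := by
        intro t
        rw [Chebyshev.psi]
        push_cast
        rfl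
      simp only [h3] at h2
      rw [h2]
      have hs0 : s ≠ 0 := by
        intro h; rw [h] at hs; norm_num at hs
      have hs1 : s - 1 ≠ 0 := by
        intro h
        have : s = 1 := by linear_combination h
        rw [this] at hs; norm_num at hs
      simp
      field_simp
      ring
    · refine Asymptotics.IsBigO.of_bound (Real.log 4 + 4) ?_
      filter_upwards with n
      have h4 : ∑ k ∈ Finset.Icc 1 n, ArithmeticFunction.vonMangoldt k = Chebyshev.psi n := by
        rw [Chebyshev.psi, Nat.floor_natCast]
        rfl
      rw [h4, Real.norm_of_nonneg (Chebyshev.psi_nonneg _), Real.rpow_one,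
        Real.norm_of_nonneg (Nat.cast_nonneg n)]
      exact Chebyshev.psi_le_const_mul_self (Nat.cast_nonneg n)

/-- normalized psi in logarithmic scale -/
noncomputable def pntg (u : ℝ) : ℝ := Chebyshev.psi (Real.exp u) * Real.exp (-u)

lemma pntg_nonneg (u : ℝ) : 0 ≤ pntg u :=
  mul_nonneg (Chebyshev.psi_nonneg _) (Real.exp_pos _).le

lemma pntg_le (u : ℝ) : pntg u ≤ Real.log 4 + 4 := by
  have h := Chebyshev.psi_le_const_mul_self (Real.exp_pos u).le
  have := mul_le_mul_of_nonneg_right h (Real.exp_pos (-u)).le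
  rwa [mul_assoc, ← Real.exp_add, add_neg_cancel, Real.exp_zero, mul_one] at this

lemma pntg_meas : Measurable pntg :=
  (Chebyshev.psi_mono.measurable.comp Real.measurable_exp).mul
    (Real.measurable_exp.comp measurable_neg)

lemma pntg_mono {u v : ℝ} (h : u ≤ v) : pntg u ≤ pntg v * Real.exp (v - u) := by
  unfold pntg
  rw [mul_assoc, ← Real.exp_add, show -v + (v - u) = -u by ring]
  exact mul_le_mul_of_nonneg_right (Chebyshev.psi_mono (Real.exp_le_exp.mpr h)) (Real.exp_pos _).le

lemma pnt_exp_image : Real.exp '' Set.Ioi 0 = Set.Ioi 1 := by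
  ext x
  constructor
  · rintro ⟨u, hu, rfl⟩
    exact Real.one_lt_exp_iff.mpr hu
  · intro hx
    exact ⟨Real.log x, Real.log_pos hx, Real.exp_log (lt_trans one_pos hx)⟩

open MeasureTheory in
lemma pnt_int_one (w : ℂ) (hw : 0 < w.re) :
    IntegrableOn (fun u : ℝ => Complex.exp (-w * u)) (Set.Ioi 0) ∧
    ∫ u in Set.Ioi (0 : ℝ), Complex.exp (-w * u) = 1 / w := by
  have hw' : (-w).re < 0 := by simpa using hw
  refine ⟨integrableOn_exp_mul_complex_Ioi hw' 0, ?_⟩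
  rw [integral_exp_mul_complex_Ioi hw' 0]
  simp

open MeasureTheory in
lemma pnt_g_int (w : ℂ) (hw : 0 < w.re) :
    IntegrableOn (fun u : ℝ => ((pntg u : ℂ) - 1) * Complex.exp (-w * u)) (Set.Ioi 0) := by
  refine Integrable.bdd_mul (c := Real.log 4 + 4 + 1) (pnt_int_one w hw).1 ?_ ?_
  · exact ((Complex.measurable_ofReal.comp pntg_meas).sub_const 1).aestronglyMeasurable
  · filter_upwards with u
    calc ‖(pntg u : ℂ) - 1‖ ≤ ‖(pntg u : ℂ)‖ + ‖(1 : ℂ)‖ := norm_sub_le _ _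
      _ ≤ _ := by
        rw [Complex.norm_real, Real.norm_of_nonneg (pntg_nonneg u), norm_one]
        linarith [pntg_le u]

open MeasureTheory in
lemma pnt_laplace : ∃ H : ℂ → ℂ, ContinuousOn H {s | 1 ≤ s.re} ∧
    ∀ w : ℂ, 0 < w.re →
      (∫ u in Set.Ioi (0 : ℝ), ((pntg u : ℂ) - 1) * Complex.exp (-w * u)) = H (1 + w) := by
  obtain ⟨H, hH, h⟩ := pnt_exists_H
  refine ⟨H, hH, fun w hw => ?_⟩
  have hs : 1 < (1 + w).re := by simpa using hw
  rw [← h (1 + w) hs, ← pnt_exp_image,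
    integral_image_eq_integral_abs_deriv_smul measurableSet_Ioi
      (fun x _ => (Real.hasDerivAt_exp x).hasDerivWithinAt) (Real.exp_injective.injOn)]
  have h1 := pnt_int_one w hw
  rw [show (1 + w - 1) = w by ring, ← h1.2]
  have hkey : ∀ u : ℝ, |Real.exp u| • ((Chebyshev.psi (Real.exp u) : ℂ) *
      ((Real.exp u : ℝ) : ℂ) ^ (-(1 + w + 1))) = (pntg u : ℂ) * Complex.exp (-w * u) := by
    intro u
    rw [abs_of_pos (Real.exp_pos u), Complex.real_smul, pntg,
      Complex.cpow_def_of_ne_zero (by exact_mod_cast (Real.exp_pos u).ne'),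
      ← Complex.ofReal_log (Real.exp_pos u).le, Real.log_exp]
    push_cast
    have : Complex.exp u * (Complex.exp (u * (-(1 + w + 1)))) =
        Complex.exp (-u) * Complex.exp (-w * u) := by
      rw [← Complex.exp_add, ← Complex.exp_add]; congr 1; ring
    linear_combination (Chebyshev.psi (Real.exp u) : ℂ) * this
  simp only [hkey]
  rw [← integral_sub _ h1.1]
  · congr 1; ext u; ring
  · have := (pnt_g_int w hw).add h1.1
    refine this.congr ?_
    filter_upwards with u
    simp only [Pi.add_apply]; ring

end

section

/-- Fejer kernel -/
noncomputable def pntk (v : ℝ) : ℝ := 2 * (1 - Real.cos v) / v ^ 2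

lemma pntk_nonneg (v : ℝ) : 0 ≤ pntk v := by
  unfold pntk
  have := Real.cos_le_one v
  apply div_nonneg <;> nlinarith [sq_nonneg v]

lemma pntk_meas : Measurable pntk := by
  unfold pntk; fun_prop

lemma pntk_le (v : ℝ) : pntk v ≤ 5 * (1 + v ^ 2)⁻¹ := by
  unfold pntk
  have h2 : 0 < 1 + v ^ 2 := by positivity
  rcases eq_or_ne v 0 with rfl | hv
  · norm_num
  · have h1 : 0 < v ^ 2 := by positivity
    rw [← div_eq_mul_inv, div_le_div_iff₀ h1 h2]
    have := Real.one_sub_sq_div_two_le_cos (x := v)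
    have h3 := Real.neg_one_le_cos v
    nlinarith

open MeasureTheory in
lemma pntk_int : Integrable pntk := by
  refine Integrable.mono' (integrable_inv_one_add_sq.const_mul 5) pntk_meas.aestronglyMeasurable ?_
  filter_upwards with v
  rw [Real.norm_of_nonneg (pntk_nonneg v)]
  exact pntk_le v

lemma pntk_fourier (T v : ℝ) (hT : 0 < T) (hv : v ≠ 0) :
    ∫ τ in (-T)..T, ((1 - |τ| / T : ℝ) : ℂ) * Complex.exp (Complex.I * τ * v)
      = ((T * pntk (T * v) : ℝ) : ℂ) := by
  have hT' : (T : ℂ) ≠ 0 := by exact_mod_cast hT.ne'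
  have hv' : (v : ℂ) ≠ 0 := by exact_mod_cast hv
  have hI := Complex.I_ne_zero
  have hcont : Continuous fun τ : ℝ => ((1 - |τ| / T : ℝ) : ℂ) * Complex.exp (Complex.I * τ * v) := by
    fun_prop
  rw [← intervalIntegral.integral_add_adjacent_intervals (b := 0)
    (hcont.intervalIntegrable _ _) (hcont.intervalIntegrable _ _)]
  have hexp : ∀ τ : ℝ, HasDerivAt (fun τ : ℝ => Complex.exp (Complex.I * τ * v))
      (Complex.exp (Complex.I * τ * v) * (Complex.I * v)) τ := by
    intro τ
    have h1 : HasDerivAt (fun τ : ℝ => Complex.I * (τ : ℂ) * v) (Complex.I * v) τ := by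
      have := ((Complex.ofRealCLM.hasDerivAt (x := τ)).const_mul Complex.I).mul_const (v : ℂ)
      simpa using this
    exact h1.cexp
  have hlin : ∀ (c : ℂ) (τ : ℝ), HasDerivAt (fun τ : ℝ => 1 + c * (τ : ℂ)) c τ := by
    intro c τ
    have := ((Complex.ofRealCLM.hasDerivAt (x := τ)).const_mul c).const_add 1
    simpa using this
  have key : ∀ (c : ℂ) (a b : ℝ), ∫ τ in a..b, (1 + c * (τ : ℂ)) * Complex.exp (Complex.I * τ * v) =
      ((1 + c * b) * Complex.exp (Complex.I * b * v) / (Complex.I * v)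
        - c * Complex.exp (Complex.I * b * v) / (Complex.I * v) ^ 2) -
      ((1 + c * a) * Complex.exp (Complex.I * a * v) / (Complex.I * v)
        - c * Complex.exp (Complex.I * a * v) / (Complex.I * v) ^ 2) := by
    intro c a b
    refine intervalIntegral.integral_eq_sub_of_hasDerivAt
      (f := fun τ : ℝ => (1 + c * τ) * Complex.exp (Complex.I * τ * v) / (Complex.I * v)
        - c * Complex.exp (Complex.I * τ * v) / (Complex.I * v) ^ 2) ?_ ?_
    · intro τ _
      have := (((hlin c τ).mul (hexp τ)).div_const (Complex.I * v)).sub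
        (((hexp τ).const_mul c).div_const ((Complex.I * v) ^ 2))
      refine HasDerivAt.congr_deriv (f' := _) this ?_
      field_simp
      ring
    · apply Continuous.intervalIntegrable
      fun_prop
  have e1 : ∫ τ in (-T)..0, ((1 - |τ| / T : ℝ) : ℂ) * Complex.exp (Complex.I * τ * v) =
      ∫ τ in (-T)..0, (1 + (1 / T : ℂ) * (τ : ℂ)) * Complex.exp (Complex.I * τ * v) := by
    apply intervalIntegral.integral_congr
    intro τ hτ
    rw [Set.uIcc_of_le (by linarith)] at hτ
    simp only [abs_of_nonpos hτ.2]
    push_cast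
    ring
  have e2 : ∫ τ in (0 : ℝ)..T, ((1 - |τ| / T : ℝ) : ℂ) * Complex.exp (Complex.I * τ * v) =
      ∫ τ in (0 : ℝ)..T, (1 + (-1 / T : ℂ) * (τ : ℂ)) * Complex.exp (Complex.I * τ * v) := by
    apply intervalIntegral.integral_congr
    intro τ hτ
    rw [Set.uIcc_of_le hT.le] at hτ
    simp only [abs_of_nonneg hτ.1]
    push_cast
    ring
  rw [e1, e2, key, key]
  unfold pntk
  push_cast
  rw [Complex.cos]
  simp only [mul_zero, zero_mul, Complex.exp_zero]
  rw [show Complex.I * (-(T : ℂ)) * v = -(T * v) * Complex.I by ring,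
    show Complex.I * (T : ℂ) * v = T * v * Complex.I by ring]
  have : (Complex.I * (v : ℂ)) ^ 2 = - v ^ 2 := by rw [mul_pow, Complex.I_sq]; ring
  rw [this]
  field_simp
  ring

open MeasureTheory in
lemma pnt_fubini {H : ℂ → ℂ} (h : ∀ w : ℂ, 0 < w.re →
      (∫ u in Set.Ioi (0 : ℝ), ((pntg u : ℂ) - 1) * Complex.exp (-w * u)) = H (1 + w))
    (T : ℝ) (hT : 0 < T) (ε : ℝ) (hε : 0 < ε) (x : ℝ) :
    ∫ u in Set.Ioi (0 : ℝ), (((pntg u : ℂ) - 1) * Complex.exp (-ε * u)) *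
        ((T * pntk (T * (x - u)) : ℝ) : ℂ) =
      ∫ τ in Set.Ioc (-T) T, ((1 - |τ| / T : ℝ) : ℂ) * Complex.exp (Complex.I * τ * x) *
        H (1 + (ε + Complex.I * τ)) := by
  have hre : ∀ τ : ℝ, 0 < ((ε : ℂ) + Complex.I * τ).re := by intro τ; simpa using hε
  have hx : ∀ᵐ u : ℝ ∂(volume.restrict (Set.Ioi (0 : ℝ))), u ≠ x := by
    apply ae_restrict_of_ae
    rw [ae_iff]; simp
  have e1 : ∫ u in Set.Ioi (0 : ℝ), (((pntg u : ℂ) - 1) * Complex.exp (-ε * u)) *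
        ((T * pntk (T * (x - u)) : ℝ) : ℂ) =
      ∫ u in Set.Ioi (0 : ℝ), ∫ τ in Set.Ioc (-T) T, (((pntg u : ℂ) - 1) * Complex.exp (-ε * u)) *
        (((1 - |τ| / T : ℝ) : ℂ) * Complex.exp (Complex.I * τ * ((x - u : ℝ) : ℂ))) := by
    apply integral_congr_ae
    filter_upwards [hx] with u hu
    rw [integral_const_mul, ← intervalIntegral.integral_of_le (by linarith),
      pntk_fourier T (x - u) hT (sub_ne_zero.mpr hu.symm)]
  rw [e1, integral_integral_swap]
  · apply integral_congr_ae
    filter_upwards with τ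
    rw [← h _ (hre τ), ← integral_const_mul]
    congr 1
    ext u
    have : Complex.exp (-ε * u) * Complex.exp (Complex.I * τ * ((x - u : ℝ) : ℂ)) =
        Complex.exp (Complex.I * τ * x) * Complex.exp (-(ε + Complex.I * τ) * u) := by
      rw [← Complex.exp_add, ← Complex.exp_add]; congr 1; push_cast; ring
    linear_combination ((pntg u : ℂ) - 1) * ((1 - |τ| / T : ℝ) : ℂ) * this
  · have i1 : Integrable (fun u : ℝ => ((pntg u : ℂ) - 1) * Complex.exp (-ε * u))
        (volume.restrict (Set.Ioi (0 : ℝ))) := by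
      have := pnt_g_int ε (by simpa using hε)
      exact this
    have i2 : Integrable (fun τ : ℝ => ((1 - |τ| / T : ℝ) : ℂ))
        (volume.restrict (Set.Ioc (-T) T)) := by
      have hc : Continuous fun τ : ℝ => ((1 - |τ| / T : ℝ) : ℂ) := by fun_prop
      exact (hc.integrableOn_Icc (a := -T) (b := T)).mono_set Set.Ioc_subset_Icc_self
    have i3 := i1.mul_prod i2
    have hm : AEStronglyMeasurable (fun z : ℝ × ℝ => Complex.exp (Complex.I * z.2 * ((x - z.1 : ℝ) : ℂ)))
        ((volume.restrict (Set.Ioi (0 : ℝ))).prod (volume.restrict (Set.Ioc (-T) T))) := by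
      have : Continuous (fun z : ℝ × ℝ => Complex.exp (Complex.I * z.2 * ((x - z.1 : ℝ) : ℂ))) := by
        fun_prop
      exact this.aestronglyMeasurable
    have i4 := i3.bdd_mul (c := 1) hm (by
      filter_upwards with z
      rw [show Complex.I * z.2 * ((x - z.1 : ℝ) : ℂ) = ((z.2 * (x - z.1) : ℝ) : ℂ) * Complex.I by
        push_cast; ring, Complex.norm_exp_ofReal_mul_I])
    refine i4.congr ?_
    filter_upwards with z
    simp only [Function.uncurry]
    ring

end

section

open MeasureTheory Filter Topology in
lemma pnt_limit {H : ℂ → ℂ} (hH : ContinuousOn H {s | 1 ≤ s.re}) (h : ∀ w : ℂ, 0 < w.re →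
      (∫ u in Set.Ioi (0 : ℝ), ((pntg u : ℂ) - 1) * Complex.exp (-w * u)) = H (1 + w))
    (T : ℝ) (hT : 0 < T) (x : ℝ) :
    ∫ u in Set.Ioi (0 : ℝ), ((pntg u : ℂ) - 1) * ((T * pntk (T * (x - u)) : ℝ) : ℂ) =
      ∫ τ in Set.Ioc (-T) T, ((1 - |τ| / T : ℝ) : ℂ) * Complex.exp (Complex.I * τ * x) *
        H (1 + Complex.I * τ) := by
  have hC : ∀ u : ℝ, ‖(pntg u : ℂ) - 1‖ ≤ Real.log 4 + 5 := by
    intro u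
    calc ‖(pntg u : ℂ) - 1‖ ≤ ‖(pntg u : ℂ)‖ + ‖(1 : ℂ)‖ := norm_sub_le _ _
      _ ≤ _ := by
        rw [Complex.norm_real, Real.norm_of_nonneg (pntg_nonneg u), norm_one]
        linarith [pntg_le u]
  have hkint : Integrable (fun u => T * pntk (T * (x - u))) := by
    have := (pntk_int.comp_mul_left' hT.ne').comp_sub_left x
    exact this.const_mul T
  have hkm : Measurable (fun u => T * pntk (T * (x - u))) := by
    have := pntk_meas
    fun_prop
  have hgm : Measurable (fun u => ((pntg u : ℂ) - 1)) := by
    have := pntg_meas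
    fun_prop
  have L : Tendsto (fun ε : ℝ => ∫ u in Set.Ioi (0 : ℝ), (((pntg u : ℂ) - 1) * Complex.exp (-ε * u)) *
        ((T * pntk (T * (x - u)) : ℝ) : ℂ)) (𝓝[>] 0)
      (𝓝 (∫ u in Set.Ioi (0 : ℝ), ((pntg u : ℂ) - 1) * ((T * pntk (T * (x - u)) : ℝ) : ℂ))) := by
    refine tendsto_integral_filter_of_dominated_convergence
      (fun u => (Real.log 4 + 5) * (T * pntk (T * (x - u)))) ?_ ?_ ?_ ?_
    · filter_upwards with ε
      apply Measurable.aestronglyMeasurable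
      fun_prop
    · filter_upwards [self_mem_nhdsWithin] with ε hε
      filter_upwards [ae_restrict_mem measurableSet_Ioi] with u hu
      rw [norm_mul, norm_mul, Complex.norm_real, Real.norm_of_nonneg
        (mul_nonneg hT.le (pntk_nonneg _))]
      have : ‖Complex.exp (-ε * u)‖ ≤ 1 := by
        rw [Complex.norm_exp]
        simp only [Set.mem_Ioi] at hu hε
        have : 0 ≤ ε * u := by positivity
        simpa using this
      have h0 := mul_nonneg hT.le (pntk_nonneg (T * (x - u)))
      gcongr
      calc _ ≤ (Real.log 4 + 5) * 1 := by
            gcongr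
            exact hC u
        _ = _ := by ring
    · exact (hkint.const_mul _).integrableOn
    · filter_upwards with u
      have : Continuous fun ε : ℝ => (((pntg u : ℂ) - 1) * Complex.exp (-ε * u)) *
        ((T * pntk (T * (x - u)) : ℝ) : ℂ) := by fun_prop
      have := (this.tendsto 0).mono_left (nhdsWithin_le_nhds (s := Set.Ioi 0))
      simpa using this
  have hHc : ContinuousOn (fun p : ℝ × ℝ => H (1 + (p.1 + Complex.I * p.2)))
      (Set.Icc 0 1 ×ˢ Set.Icc (-T) T) := by
    apply hH.comp
    · apply Continuous.continuousOn; fun_prop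
    · intro p hp
      simp only [Set.mem_setOf_eq]
      simpa using hp.1.1
  obtain ⟨B, hB⟩ := (isCompact_Icc.prod isCompact_Icc).exists_bound_of_continuousOn hHc
  have R : Tendsto (fun ε : ℝ => ∫ τ in Set.Ioc (-T) T, ((1 - |τ| / T : ℝ) : ℂ) *
        Complex.exp (Complex.I * τ * x) * H (1 + (ε + Complex.I * τ))) (𝓝[>] 0)
      (𝓝 (∫ τ in Set.Ioc (-T) T, ((1 - |τ| / T : ℝ) : ℂ) * Complex.exp (Complex.I * τ * x) *
        H (1 + Complex.I * τ))) := by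
    refine tendsto_integral_filter_of_dominated_convergence (fun τ => 1 * 1 * B) ?_ ?_ ?_ ?_
    · filter_upwards [self_mem_nhdsWithin] with ε hε
      apply ContinuousOn.aestronglyMeasurable _ measurableSet_Ioc
      apply ContinuousOn.mul
      · apply Continuous.continuousOn; fun_prop
      · apply hH.comp
        · apply Continuous.continuousOn; fun_prop
        · intro p hp
          simp only [Set.mem_setOf_eq]
          simpa using (le_of_lt hε)
    · filter_upwards [Ioo_mem_nhdsGT (show (0:ℝ) < 1 by norm_num)] with ε hε
      filter_upwards [ae_restrict_mem measurableSet_Ioc] with τ hτ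
      rw [norm_mul, norm_mul, Complex.norm_real]
      have h1 : ‖1 - |τ| / T‖ ≤ 1 := by
        have : |τ| ≤ T := abs_le.mpr ⟨hτ.1.le, hτ.2⟩
        have h2 : |τ| / T ≤ 1 := by rw [div_le_one hT]; exact this
        have h3 : 0 ≤ |τ| / T := by positivity
        rw [Real.norm_eq_abs, abs_le]; constructor <;> linarith
      have h2 : ‖Complex.exp (Complex.I * τ * x)‖ ≤ 1 := by
        rw [show Complex.I * τ * x = ((τ * x : ℝ) : ℂ) * Complex.I by push_cast; ring,
          Complex.norm_exp_ofReal_mul_I]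
      have h3 := hB (ε, τ) ⟨⟨hε.1.le, hε.2.le⟩, ⟨hτ.1.le, hτ.2⟩⟩
      gcongr
    · simp
    · filter_upwards with τ
      apply Tendsto.const_mul
      have h1 : ContinuousWithinAt H {s | 1 ≤ s.re} (1 + Complex.I * τ) := by
        apply hH; simp
      apply h1.tendsto.comp
      apply tendsto_nhdsWithin_of_tendsto_nhds_of_eventually_within
      · have : Continuous fun ε : ℝ => (1 + (ε + Complex.I * τ) : ℂ) := by fun_prop
        have := (this.tendsto 0).mono_left (nhdsWithin_le_nhds (s := Set.Ioi 0))
        simpa using this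
      · filter_upwards [self_mem_nhdsWithin] with ε hε
        simpa using (le_of_lt hε)
  refine tendsto_nhds_unique L (R.congr' ?_)
  filter_upwards [self_mem_nhdsWithin] with ε hε
  exact (pnt_fubini h T hT ε hε x).symm

open MeasureTheory Filter Topology in
lemma pnt_RL {H : ℂ → ℂ} 
    (T : ℝ)  :
    Tendsto (fun x : ℝ => ∫ τ in Set.Ioc (-T) T, ((1 - |τ| / T : ℝ) : ℂ) * Complex.exp (Complex.I * τ * x) *
        H (1 + Complex.I * τ)) atTop (𝓝 0) := by
  have := Real.tendsto_integral_exp_smul_cocompact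
    ((Set.Ioc (-T) T).indicator fun τ : ℝ => ((1 - |τ| / T : ℝ) : ℂ) * H (1 + Complex.I * τ))
  have hx : Tendsto (fun x : ℝ => -x / (2 * Real.pi)) atTop (cocompact ℝ) := by
    have h1 : Tendsto (fun x : ℝ => -x / (2 * Real.pi)) atTop atBot := by
      apply Tendsto.atBot_div_const (by positivity)
      exact tendsto_neg_atTop_atBot
    exact h1.mono_right (by rw [cocompact_eq_atBot_atTop]; exact le_sup_left)
  refine (this.comp hx).congr ?_
  intro x
  simp only [Function.comp]
  rw [← integral_indicator measurableSet_Ioc]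
  congr 1
  ext τ
  by_cases hτ : τ ∈ Set.Ioc (-T) T
  · rw [Set.indicator_of_mem hτ, Set.indicator_of_mem hτ, Circle.smul_def, smul_eq_mul,
      Real.fourierChar_apply]
    have : ((2 * Real.pi * -(τ * (-x / (2 * Real.pi))) : ℝ) : ℂ) * Complex.I = Complex.I * τ * x := by
      have : 2 * Real.pi * -(τ * (-x / (2 * Real.pi))) = τ * x := by
        field_simp
      rw [this]; push_cast; ring
    rw [this]
    ring
  · rw [Set.indicator_of_notMem hτ, Set.indicator_of_notMem hτ, smul_zero]

open MeasureTheory Filter Topology in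
lemma pnt_conv (T : ℝ) (hT : 0 < T) :
    Tendsto (fun x : ℝ => ∫ u in Set.Ioi (0 : ℝ), (pntg u - 1) * (T * pntk (T * (x - u)))) atTop
      (𝓝 0) := by
  obtain ⟨H, hH, h⟩ := pnt_laplace
  have h1 := pnt_RL (H := H) T
  have h2 := (Complex.continuous_re.tendsto _).comp h1
  simp only [Complex.zero_re] at h2
  refine h2.congr ?_
  intro x
  simp only [Function.comp]
  rw [← pnt_limit hH h T hT x]
  have : ∫ u in Set.Ioi (0 : ℝ), ((pntg u : ℂ) - 1) * ((T * pntk (T * (x - u)) : ℝ) : ℂ) =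
    ((∫ u in Set.Ioi (0 : ℝ), (pntg u - 1) * (T * pntk (T * (x - u))) : ℝ) : ℂ) := by
    rw [← integral_complex_ofReal]
    congr 1
    ext u
    push_cast
    ring
  rw [this, Complex.ofReal_re]

end

section

open MeasureTheory Filter Topology in
lemma pntk_pos : 0 < ∫ v, pntk v := by
  have h1 : 0 < ∫ v in (0:ℝ)..1, pntk v := by
    apply intervalIntegral.intervalIntegral_pos_of_pos_on
    · exact pntk_int.intervalIntegrable
    · intro v hv
      unfold pntk
      have : Real.cos v < 1 := by
        rw [← Real.cos_zero]
        apply Real.cos_lt_cos_of_nonneg_of_le_pi le_rfl _ hv.1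
        linarith [hv.2, Real.pi_gt_three]
      have h0 := hv.1
      apply div_pos (by linarith) (by positivity)
    · norm_num
  rw [intervalIntegral.integral_of_le (by norm_num)] at h1
  exact h1.trans_le (setIntegral_le_integral pntk_int (ae_of_all _ pntk_nonneg))

open MeasureTheory Filter Topology in
lemma pntK_int (T x : ℝ) (hT : 0 < T) : Integrable (fun u => T * pntk (T * (x - u))) := by
  have := (pntk_int.comp_mul_left' hT.ne').comp_sub_left x
  exact this.const_mul T

open MeasureTheory Filter Topology in
lemma pntK_total (T x : ℝ) (hT : 0 < T) : ∫ u, T * pntk (T * (x - u)) = ∫ v, pntk v := by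
  rw [integral_sub_left_eq_self (fun w => T * pntk (T * w)) volume x, integral_const_mul,
    Measure.integral_comp_mul_left pntk T, abs_of_pos (by positivity), smul_eq_mul]
  field_simp

open MeasureTheory Filter Topology in
lemma pntK_part (T x δ : ℝ) (hδ : 0 ≤ δ) :
    ∫ u in Set.Icc (x - δ) (x + δ), T * pntk (T * (x - u)) = ∫ v in (-(T*δ))..(T*δ), pntk v := by
  rw [integral_Icc_eq_integral_Ioc, ← intervalIntegral.integral_of_le (by linarith),
    intervalIntegral.integral_const_mul]
  have := intervalIntegral.mul_integral_comp_sub_mul (f := pntk) (a := x - δ) (b := x + δ) T (T * x)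
  calc _ = T * ∫ u in (x - δ)..(x + δ), pntk (T * x - T * u) := by
        simp only [mul_sub]
    _ = _ := by
        rw [this]; congr 1 <;> ring

open MeasureTheory Filter Topology in
lemma pntk_M : Tendsto (fun R : ℝ => ∫ v in (-R)..R, pntk v) atTop (𝓝 (∫ v, pntk v)) :=
  intervalIntegral_tendsto_integral pntk_int tendsto_neg_atTop_atBot tendsto_id

open MeasureTheory Filter Topology in
lemma pntK_half (T : ℝ) (hT : 0 < T) :
    Tendsto (fun x : ℝ => ∫ u in Set.Ioi (0 : ℝ), T * pntk (T * (x - u))) atTop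
      (𝓝 (∫ v, pntk v)) := by
  have hn : ∀ x u : ℝ, 0 ≤ T * pntk (T * (x - u)) := fun x u => mul_nonneg hT.le (pntk_nonneg _)
  refine tendsto_of_tendsto_of_tendsto_of_le_of_le' (g := fun x => ∫ v in (-(T * (x/2)))..(T*(x/2)), pntk v)
    (h := fun _ => ∫ v, pntk v) ?_ tendsto_const_nhds ?_ ?_
  · apply pntk_M.comp
    apply Tendsto.const_mul_atTop hT
    apply Tendsto.atTop_div_const (by norm_num) tendsto_id
  · filter_upwards [eventually_gt_atTop 0] with x hx
    rw [← pntK_part T x (x/2) (by linarith)]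
    apply setIntegral_mono_set (pntK_int T x hT).integrableOn (ae_of_all _ (hn x))
    apply HasSubset.Subset.eventuallyLE
    intro u hu
    have := hu.1
    simp only [Set.mem_Ioi]; linarith
  · filter_upwards with x
    rw [← pntK_total T x hT]
    exact setIntegral_le_integral (pntK_int T x hT) (ae_of_all _ (hn x))

open MeasureTheory Filter Topology in
lemma pntgK_int (T x : ℝ) (hT : 0 < T) : Integrable (fun u => pntg u * (T * pntk (T * (x - u)))) := by
  apply (pntK_int T x hT).bdd_mul (c := Real.log 4 + 4) pntg_meas.aestronglyMeasurable
  filter_upwards with u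
  rw [Real.norm_of_nonneg (pntg_nonneg u)]
  exact pntg_le u

open MeasureTheory Filter Topology in
lemma pntgK_lim (T : ℝ) (hT : 0 < T) :
    Tendsto (fun x : ℝ => ∫ u in Set.Ioi (0 : ℝ), pntg u * (T * pntk (T * (x - u)))) atTop
      (𝓝 (∫ v, pntk v)) := by
  have := (pnt_conv T hT).add (pntK_half T hT)
  rw [zero_add] at this
  refine this.congr ?_
  intro x
  rw [← integral_add]
  · congr 1; ext u; ring
  · have := ((pntgK_int T x hT).sub (pntK_int T x hT)).integrableOn (s := Set.Ioi 0)
    refine this.congr ?_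
    filter_upwards with u
    simp only [Pi.sub_apply]
    ring
  · exact (pntK_int T x hT).integrableOn

open MeasureTheory Filter Topology in
lemma pntg_upper (T δ : ℝ) (hT : 0 < T) (hδ : 0 < δ) (y : ℝ) (hy : 0 < y) :
    pntg y * Real.exp (-(2 * δ)) * (∫ v in (-(T*δ))..(T*δ), pntk v) ≤
      ∫ u in Set.Ioi (0 : ℝ), pntg u * (T * pntk (T * ((y + δ) - u))) := by
  have hn : ∀ x u : ℝ, 0 ≤ T * pntk (T * (x - u)) := fun x u => mul_nonneg hT.le (pntk_nonneg _)
  rw [← pntK_part T (y + δ) δ hδ.le, ← integral_const_mul]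
  calc _ ≤ ∫ u in Set.Icc (y + δ - δ) (y + δ + δ), pntg u * (T * pntk (T * ((y + δ) - u))) := by
        apply setIntegral_mono_on ((pntK_int T _ hT).const_mul _).integrableOn
          (pntgK_int T _ hT).integrableOn measurableSet_Icc
        intro u hu
        apply mul_le_mul_of_nonneg_right _ (hn _ _)
        have h1 := pntg_mono (u := y) (v := u) (by linarith [hu.1])
        have h2 : Real.exp (u - y) ≤ Real.exp (2 * δ) := Real.exp_le_exp.mpr (by linarith [hu.2])
        rw [Real.exp_neg, ← div_eq_mul_inv, div_le_iff₀ (Real.exp_pos _)]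
        exact h1.trans (mul_le_mul_of_nonneg_left h2 (pntg_nonneg u))
    _ ≤ _ := by
        apply setIntegral_mono_set (pntgK_int T _ hT).integrableOn
          (ae_of_all _ fun u => mul_nonneg (pntg_nonneg u) (hn _ u))
        apply HasSubset.Subset.eventuallyLE
        intro u hu
        have := hu.1
        simp only [Set.mem_Ioi]; linarith

open MeasureTheory Filter Topology in
lemma pntg_lower (T δ : ℝ) (hT : 0 < T) (hδ : 0 < δ) (y : ℝ) :
      ∫ u in Set.Ioi (0 : ℝ), pntg u * (T * pntk (T * ((y - δ) - u))) ≤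
    pntg y * Real.exp (2 * δ) * (∫ v, pntk v) + (Real.log 4 + 4) *
      ((∫ v, pntk v) - ∫ v in (-(T*δ))..(T*δ), pntk v) := by
  have hn : ∀ x u : ℝ, 0 ≤ T * pntk (T * (x - u)) := fun x u => mul_nonneg hT.le (pntk_nonneg _)
  have hl : 0 ≤ Real.log 4 + 4 := by positivity
  have i := pntgK_int T (y - δ) hT
  have i0 := pntK_int T (y - δ) hT
  have e : (∫ v, pntk v) - ∫ v in (-(T*δ))..(T*δ), pntk v =
      ∫ u in (Set.Icc (y - δ - δ) (y - δ + δ))ᶜ, T * pntk (T * ((y - δ) - u)) := by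
    rw [← pntK_part T (y - δ) δ hδ.le, ← pntK_total T (y - δ) hT,
      ← integral_add_compl (measurableSet_Icc (a := y - δ - δ) (b := y - δ + δ)) i0]
    ring
  rw [e]
  calc _ ≤ ∫ u, pntg u * (T * pntk (T * ((y - δ) - u))) :=
        setIntegral_le_integral i (ae_of_all _ fun u => mul_nonneg (pntg_nonneg u) (hn _ u))
    _ = (∫ u in Set.Icc (y - δ - δ) (y - δ + δ), pntg u * (T * pntk (T * ((y - δ) - u)))) +
        ∫ u in (Set.Icc (y - δ - δ) (y - δ + δ))ᶜ, pntg u * (T * pntk (T * ((y - δ) - u))) :=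
        (integral_add_compl measurableSet_Icc i).symm
    _ ≤ _ := by
      apply add_le_add
      · calc _ ≤ ∫ u in Set.Icc (y - δ - δ) (y - δ + δ), (pntg y * Real.exp (2 * δ)) * (T * pntk (T * ((y - δ) - u))) := by
              apply setIntegral_mono_on i.integrableOn (i0.const_mul _).integrableOn measurableSet_Icc
              intro u hu
              apply mul_le_mul_of_nonneg_right _ (hn _ _)
              refine (pntg_mono (u := u) (v := y) (by linarith [hu.2])).trans ?_
              exact mul_le_mul_of_nonneg_left (Real.exp_le_exp.mpr (by linarith [hu.1])) (pntg_nonneg y)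
          _ ≤ _ := by
              rw [integral_const_mul, ← pntK_total T (y - δ) hT]
              apply mul_le_mul_of_nonneg_left _ (mul_nonneg (pntg_nonneg y) (Real.exp_pos _).le)
              exact setIntegral_le_integral i0 (ae_of_all _ (hn _))
      · rw [← integral_const_mul]
        apply setIntegral_mono i.integrableOn (i0.const_mul _).integrableOn
        intro u
        exact mul_le_mul_of_nonneg_right (pntg_le u) (hn _ u)

open MeasureTheory Filter Topology in
theorem pntg_tendsto : Tendsto pntg atTop (𝓝 1) := by
  set m := ∫ v, pntk v with hm
  have m0 : 0 < m := pntk_pos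
  -- auxiliary limits in δ → 0+
  have hM : Tendsto (fun δ : ℝ => ∫ v in (-(δ⁻¹))..(δ⁻¹), pntk v) (𝓝[>] 0) (𝓝 m) :=
    pntk_M.comp tendsto_inv_nhdsGT_zero
  have he : Tendsto (fun δ : ℝ => Real.exp (-(2 * δ))) (𝓝[>] 0) (𝓝 1) := by
    have : Continuous fun δ : ℝ => Real.exp (-(2 * δ)) := by fun_prop
    have := (this.tendsto 0).mono_left (nhdsWithin_le_nhds (s := Set.Ioi 0))
    simpa using this
  have he' : Tendsto (fun δ : ℝ => Real.exp (2 * δ)) (𝓝[>] 0) (𝓝 1) := by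
    have : Continuous fun δ : ℝ => Real.exp (2 * δ) := by fun_prop
    have := (this.tendsto 0).mono_left (nhdsWithin_le_nhds (s := Set.Ioi 0))
    simpa using this
  have hT : ∀ δ : ℝ, 0 < δ → (δ ^ 2)⁻¹ * δ = δ⁻¹ := by
    intro δ h; field_simp
  rw [tendsto_order]
  constructor
  · intro a ha
    -- lower
    have l1 : Tendsto (fun δ : ℝ => a * Real.exp (2 * δ) * m + (Real.log 4 + 4) *
      (m - ∫ v in (-(δ⁻¹))..(δ⁻¹), pntk v)) (𝓝[>] 0) (𝓝 (a * 1 * m + (Real.log 4 + 4) * (m - m))) :=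
      ((he'.const_mul a).mul_const m).add ((tendsto_const_nhds.sub hM).const_mul _)
    have l2 : a * 1 * m + (Real.log 4 + 4) * (m - m) < m := by nlinarith
    obtain ⟨δ, hδ, hδ0⟩ := ((l1.eventually (gt_mem_nhds l2)).and self_mem_nhdsWithin).exists
    replace hδ0 : 0 < δ := hδ0
    have l3 := (pntgK_lim (δ^2)⁻¹ (by positivity)).comp (tendsto_atTop_add_const_right atTop (-δ) tendsto_id)
    filter_upwards [l3.eventually (lt_mem_nhds hδ)] with y hy
    simp only [Function.comp, id] at hy
    have := pntg_lower (δ^2)⁻¹ δ (by positivity) hδ0 y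
    rw [hT δ hδ0] at this
    rw [← sub_eq_add_neg] at hy
    have h3 := hy.trans_le this
    rw [← hm] at h3
    have h4 : a * (Real.exp (2 * δ) * m) < pntg y * (Real.exp (2 * δ) * m) := by linarith
    exact lt_of_mul_lt_mul_right h4 (by positivity)
  · intro a ha
    have l1 : Tendsto (fun δ : ℝ => a * Real.exp (-(2 * δ)) * ∫ v in (-(δ⁻¹))..(δ⁻¹), pntk v)
       (𝓝[>] 0) (𝓝 (a * 1 * m)) :=
      (he.const_mul a).mul hM
    have l2 : m < a * 1 * m := by nlinarith
    obtain ⟨δ, ⟨hδ, hδM⟩, hδ0⟩ := (((l1.eventually (lt_mem_nhds l2)).and 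
      (hM.eventually (lt_mem_nhds m0))).and self_mem_nhdsWithin).exists
    replace hδ0 : 0 < δ := hδ0
    have l3 := (pntgK_lim (δ^2)⁻¹ (by positivity)).comp (tendsto_atTop_add_const_right atTop δ tendsto_id)
    filter_upwards [l3.eventually (gt_mem_nhds hδ), eventually_gt_atTop 0] with y hy hy0
    simp only [Function.comp, id] at hy
    have := pntg_upper (δ^2)⁻¹ δ (by positivity) hδ0 y hy0
    rw [hT δ hδ0] at this
    have h3 := this.trans_lt hy
    have h4 : pntg y * (Real.exp (-(2 * δ)) * ∫ v in (-(δ⁻¹))..(δ⁻¹), pntk v) <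
      a * (Real.exp (-(2 * δ)) * ∫ v in (-(δ⁻¹))..(δ⁻¹), pntk v) := by linarith
    exact lt_of_mul_lt_mul_right h4 (by positivity)

open Filter Topology in
theorem pnt_psi : Tendsto (fun x : ℝ => Chebyshev.psi x / x) atTop (𝓝 1) := by
  refine (pntg_tendsto.comp Real.tendsto_log_atTop).congr' ?_
  filter_upwards [eventually_gt_atTop 0] with x hx
  simp only [Function.comp, pntg]
  rw [Real.exp_neg, Real.exp_log hx]
  rfl

open Filter Topology in
theorem pnt_theta : Tendsto (fun x : ℝ => Chebyshev.theta x / x) atTop (𝓝 1) := by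
  have h0 : Tendsto (fun x : ℝ => 2 * (Real.log x / x ^ (1/2 : ℝ))) atTop (𝓝 0) := by
    have := (isLittleO_log_rpow_atTop (r := 1/2) (by norm_num)).tendsto_div_nhds_zero
    simpa using this.const_mul 2
  have h1 : Tendsto (fun x : ℝ => (Chebyshev.psi x - Chebyshev.theta x) / x) atTop (𝓝 0) := by
    apply squeeze_zero_norm' _ h0
    filter_upwards [eventually_ge_atTop 1] with x hx
    have := Chebyshev.abs_psi_sub_theta_le_sqrt_mul_log hx
    rw [norm_div, Real.norm_eq_abs, Real.norm_of_nonneg (by linarith), ← Real.sqrt_eq_rpow]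
    have hs : 0 < Real.sqrt x := Real.sqrt_pos.mpr (by linarith)
    rw [div_le_iff₀ (by linarith)]
    calc _ ≤ _ := this
      _ = 2 * (Real.log x / Real.sqrt x) * (Real.sqrt x * Real.sqrt x) := by field_simp
      _ = _ := by rw [Real.mul_self_sqrt (by linarith)]
  have := pnt_psi.sub h1
  rw [sub_zero] at this
  refine this.congr fun x => ?_
  ring

end

section

open Polynomial

/-- weighted divisibility of coefficients -/
def wtd (c : ℤ) (v : ℕ → ℕ → ℕ) (d : ℕ) (p : ℤ[X]) : Prop := ∀ m, c ^ v d m ∣ p.coeff m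

lemma wtd_mul {c : ℤ} {v : ℕ → ℕ → ℕ} (hv : ∀ d₁ d₂ i j, v (d₁ + d₂) (i + j) ≤ v d₁ i + v d₂ j)
    {d₁ d₂ : ℕ} {p q : ℤ[X]} (hp : wtd c v d₁ p) (hq : wtd c v d₂ q) :
    wtd c v (d₁ + d₂) (p * q) := by
  intro m
  rw [coeff_mul]
  apply Finset.dvd_sum
  rintro ⟨i, j⟩ hij
  replace hij : i + j = m := by simpa using hij
  simp only
  subst hij
  refine (pow_dvd_pow c (hv d₁ d₂ i j)).trans ?_
  rw [pow_add]
  exact mul_dvd_mul (hp i) (hq j)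

lemma wtd_pow {c : ℤ} {v : ℕ → ℕ → ℕ} (hv : ∀ d₁ d₂ i j, v (d₁ + d₂) (i + j) ≤ v d₁ i + v d₂ j)
    (h0 : v 0 0 = 0) {d : ℕ} {p : ℤ[X]} (hp : wtd c v d p) (k : ℕ) :
    wtd c v (k * d) (p ^ k) := by
  induction k with
  | zero =>
    intro m
    rw [pow_zero, coeff_one]
    split_ifs with h
    · subst h; simp [h0]
    · simp
  | succ k ih =>
    rw [pow_succ, Nat.succ_mul]
    exact wtd_mul hv ih hp

/-- the quadratic factor -/
noncomputable def fq : ℤ[X] := C 42 - C 350 * X + C 729 * X ^ 2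
/-- the linear factor -/
noncomputable def fl : ℤ[X] := 1 - C 4 * X
/-- the main polynomial -/
noncomputable def ff (n : ℕ) : ℤ[X] := fq ^ (8 * n) * fl ^ (7 * n)

lemma fq_coeff (m : ℕ) : fq.coeff m = if m = 0 then 42 else if m = 1 then -350 else
    if m = 2 then 729 else 0 := by
  unfold fq
  rcases m with _ | _ | _ | m <;>
    simp [coeff_X, coeff_X_pow, coeff_sub, coeff_add]

lemma fl_coeff (m : ℕ) : fl.coeff m = if m = 0 then 1 else if m = 1 then -4 else 0 := by
  unfold fl
  rcases m with _ | _ | m <;> simp [coeff_X, coeff_one]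

lemma ff_wtd {c : ℤ} {v : ℕ → ℕ → ℕ} (hv : ∀ d₁ d₂ i j, v (d₁ + d₂) (i + j) ≤ v d₁ i + v d₂ j)
    (h0 : v 0 0 = 0) (d₁ d₂ : ℕ) (h1 : wtd c v d₁ fq) (h2 : wtd c v d₂ fl) (n : ℕ) :
    wtd c v (8 * n * d₁ + 7 * n * d₂) (ff n) :=
  wtd_mul hv (wtd_pow hv h0 h1 _) (wtd_pow hv h0 h2 _)

lemma ff_729 (n m : ℕ) : (729 : ℤ) ^ (m - 15 * n) ∣ (ff n).coeff m := by
  have := ff_wtd (c := 729) (v := fun d m => m - d) (by intros; omega) (by simp) 1 1 ?_ ?_ n m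
  · convert this using 3; ring
  · intro m
    rw [fq_coeff]
    rcases m with _ | _ | _ | m <;> simp
  · intro m
    rw [fl_coeff]
    rcases m with _ | _ | m <;> simp

lemma ff_14 (n m : ℕ) : (14 : ℤ) ^ ((16 * n + 1 - m) / 2) ∣ (ff n).coeff m := by
  have := ff_wtd (c := 14) (v := fun d m => (d + 1 - m) / 2) (by intros; omega) (by simp) 2 0 ?_ ?_ n m
  · convert this using 4; ring
  · intro m
    rw [fq_coeff]
    rcases m with _ | _ | _ | m <;> norm_num
  · intro m
    rw [fl_coeff]
    rcases m with _ | _ | m <;> simp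

lemma ff_3 (n m : ℕ) : (3 : ℤ) ^ (8 * n - m) ∣ (ff n).coeff m := by
  have := ff_wtd (c := 3) (v := fun d m => d - m) (by intros; omega) (by simp) 1 0 ?_ ?_ n m
  · convert this using 3; ring
  · intro m
    rw [fq_coeff]
    rcases m with _ | _ | _ | m <;> norm_num
  · intro m
    rw [fl_coeff]
    rcases m with _ | _ | m <;> simp

lemma ff_deg (n : ℕ) : (ff n).natDegree ≤ 23 * n := by
  have h1 : fq.natDegree ≤ 2 := by unfold fq; compute_degree
  have h2 : fl.natDegree ≤ 1 := by unfold fl; compute_degree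
  unfold ff
  refine natDegree_mul_le.trans ?_
  have h3 := natDegree_pow_le (p := fq) (n := 8 * n)
  have h4 := natDegree_pow_le (p := fl) (n := 7 * n)
  nlinarith

/-- partial fraction coefficients -/
noncomputable def gg (n j : ℕ) : ℤ :=
  ∑ e ∈ Finset.Icc j (14 * n + 1), (ff n).coeff (14 * n + 1 - e) * ((2 * e - 1 - j).choose (e - 1) : ℤ)

/-- polynomial part -/
noncomputable def EE (n : ℕ) : ℤ[X] :=
  ∑ e ∈ Finset.range (9 * n), C ((ff n).coeff (14 * n + 1 + e)) * (X * (1 - X)) ^ e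

lemma gg_14 (n j : ℕ) : (14 : ℤ) ^ (j / 2) ∣ gg n j := by
  unfold gg
  apply Finset.dvd_sum
  intro e he
  rw [Finset.mem_Icc] at he
  apply Dvd.dvd.mul_right
  refine (pow_dvd_pow _ ?_).trans (ff_14 n _)
  omega

lemma gg_3 (n j : ℕ) (_ : 1 ≤ j) : (3 : ℤ) ^ (j - 1) ∣ 3 ^ (6 * n) * gg n j := by
  unfold gg
  rw [Finset.mul_sum]
  apply Finset.dvd_sum
  intro e he
  rw [Finset.mem_Icc] at he
  rw [← mul_assoc]
  apply Dvd.dvd.mul_right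
  refine Dvd.dvd.trans ?_ (mul_dvd_mul_left _ (ff_3 n _))
  rw [← pow_add]
  apply pow_dvd_pow
  omega

lemma EE_deg1 (e : ℕ) : ((X * (1 - X) : ℤ[X]) ^ e).natDegree ≤ 2 * e := by
  have h1 : (X * (1 - X) : ℤ[X]).natDegree ≤ 2 := by compute_degree
  have := natDegree_pow_le (p := (X * (1 - X) : ℤ[X])) (n := e)
  nlinarith

lemma EE_deg (n : ℕ) (hn : 1 ≤ n) : (EE n).natDegree ≤ 18 * n - 2 := by
  unfold EE
  apply natDegree_sum_le_of_forall_le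
  intro e he
  rw [Finset.mem_range] at he
  refine (natDegree_C_mul_le _ _).trans ((EE_deg1 e).trans (by omega))

lemma EE_27 (n k : ℕ) : (27 : ℤ) ^ (k + 1) ∣ 3 ^ (6 * n) * (EE n).coeff k := by
  unfold EE
  rw [finsetSum_coeff, Finset.mul_sum]
  apply Finset.dvd_sum
  intro e he
  rw [coeff_C_mul]
  by_cases hk : k ≤ 2 * e
  · rw [← mul_assoc]
    apply Dvd.dvd.mul_right
    refine Dvd.dvd.trans ?_ (mul_dvd_mul_left _ (ff_729 n _))
    rw [show (729 : ℤ) = 3 ^ 6 by norm_num, show (27 : ℤ) = 3 ^ 3 by norm_num, ← pow_mul, ← pow_mul,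
      ← pow_add]
    apply pow_dvd_pow
    omega
  · rw [coeff_eq_zero_of_natDegree_lt ((EE_deg1 e).trans_lt (by omega))]
    simp

lemma pf_identity {R : Type*} [CommRing R] (a b : R) (hab : a + b = 1) (p q : ℕ) :
    (∑ i ∈ Finset.range (p + 1), ((q + i).choose i : R) * a ^ i * b ^ (q + 1)) +
    (∑ i ∈ Finset.range (q + 1), ((p + i).choose i : R) * a ^ (p + 1) * b ^ i) = 1 := by
  have ha : a = 1 - b := by rw [← hab]; ring
  induction p with
  | zero =>
    simp only [zero_add, Finset.range_one, Finset.sum_singleton, Nat.choose_zero_right, pow_zero,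
      pow_one, Nat.choose_self, Nat.cast_one, one_mul, mul_one]
    rw [← Finset.mul_sum]
    have := mul_neg_geom_sum b (q + 1)
    rw [ha, this]; ring
  | succ p ih =>
    rw [← ih, Finset.sum_range_succ _ (p + 1), add_assoc]
    congr 1
    have tel : ∀ Q : ℕ, ∑ i ∈ Finset.range (Q + 1), (((p + 1 + i).choose i : R) * a ^ (p + 1 + 1) * b ^ i -
        ((p + i).choose i : R) * a ^ (p + 1) * b ^ i) =
        - (((Q + (p + 1)).choose (p + 1) : R) * a ^ (p + 1) * b ^ (Q + 1)) := by
      intro Q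
      induction Q with
      | zero => simp; rw [ha]; ring
      | succ Q ihQ =>
        rw [Finset.sum_range_succ, ihQ]
        have c1 : (p + 1 + (Q + 1)).choose (Q + 1) = (p + 1 + Q).choose (p+1) + (p + (Q + 1)).choose (Q + 1) := by
          rw [show p + 1 + (Q + 1) = (p + Q + 1) + 1 by ring, Nat.choose_succ_succ,
            show p + Q + 1 = p + 1 + Q by ring, show p + (Q + 1) = p + 1 + Q by ring]
          congr 1
          rw [Nat.choose_symm_of_eq_add]; omega
        have c2 : (Q + 1 + (p + 1)).choose (p + 1) = (p + 1 + Q).choose (p+1) + (p + (Q + 1)).choose (Q + 1) := by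
          rw [← c1, show Q + 1 + (p + 1) = p + 1 + (Q + 1) by ring]
          exact Nat.choose_symm_of_eq_add rfl
        rw [c1, c2, show Q + (p + 1) = p + 1 + Q by ring]
        push_cast
        rw [ha]; ring
    have := tel q
    rw [Finset.sum_sub_distrib] at this
    linear_combination this

lemma pf_identity' {R : Type*} [CommRing R] (a b : R) (hab : a + b = 1) (e : ℕ) (he : 1 ≤ e) :
    ∑ j ∈ Finset.Icc 1 e, ((2 * e - 1 - j).choose (e - 1) : R) *
      (a ^ (e - j) * b ^ e + a ^ e * b ^ (e - j)) = 1 := by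
  obtain ⟨e, rfl⟩ : ∃ e', e = e' + 1 := ⟨e - 1, by omega⟩
  rw [← pf_identity a b hab e e, ← Finset.sum_add_distrib]
  symm
  apply Finset.sum_bij' (i := fun i _ => e + 1 - i) (j := fun j _ => e + 1 - j)
  · intro i hi; simp only [Finset.mem_range, Finset.mem_Icc] at *; omega
  · intro i hi; simp only [Finset.mem_range, Finset.mem_Icc] at *; omega
  · intro i hi; simp only [Finset.mem_range] at *; omega
  · intro i hi; simp only [Finset.mem_Icc] at *; omega
  · intro i hi
    simp only [Finset.mem_range] at hi
    rw [show 2 * (e + 1) - 1 - (e + 1 - i) = e + i by omega, show e + 1 - 1 = e by omega,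
      show e + 1 - (e + 1 - i) = i by omega, show (e + i).choose i = (e + i).choose e by
        rw [Nat.choose_symm_add]]
    ring

/-- the polynomial identity -/
lemma PI_identity (n : ℕ) {R : Type*} [CommRing R] (a b : R) (hab : a + b = 1) :
    eval₂ (Int.castRingHom R) (a * b) (ff n) = (a * b) ^ (14 * n + 1) * eval₂ (Int.castRingHom R) a (EE n)
      + ∑ j ∈ Finset.Icc 1 (14 * n + 1), (gg n j : R) *
        (a ^ (14 * n + 1 - j) * b ^ (14 * n + 1) + a ^ (14 * n + 1) * b ^ (14 * n + 1 - j)) := by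
  set K := 14 * n + 1 with hK
  have hb : b = 1 - a := by rw [← hab]; ring
  rw [eval₂_eq_sum_range' (Int.castRingHom R) (n := K + 9 * n) (by have := ff_deg n; omega),
    Finset.sum_range_add, add_comm]
  congr 1
  · unfold EE
    rw [eval₂_finsetSum, Finset.mul_sum]
    apply Finset.sum_congr rfl
    intro e he
    rw [eval₂_mul, eval₂_pow, eval₂_mul, eval₂_sub, eval₂_one, eval₂_X, eval₂_C, ← hb, pow_add]
    ring
  · unfold gg
    simp only [← hK]
    push_cast
    simp only [Finset.sum_mul]
    rw [Finset.sum_comm' (t' := Finset.Icc 1 K) (s' := fun e => Finset.Icc 1 e)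
      (by intro x y; simp only [Finset.mem_Icc]; omega)]
    have inner : ∀ e ∈ Finset.Icc 1 K, ∑ j ∈ Finset.Icc 1 e, ((ff n).coeff (K - e) : R) *
        ((2 * e - 1 - j).choose (e - 1) : R) * (a ^ (K - j) * b ^ K + a ^ K * b ^ (K - j)) =
        ((ff n).coeff (K - e) : R) * (a * b) ^ (K - e) := by
      intro e he
      rw [Finset.mem_Icc] at he
      have h1 := pf_identity' a b hab e he.1
      rw [← mul_one (((ff n).coeff (K - e) : R) * (a * b) ^ (K - e)), ← h1, Finset.mul_sum]
      apply Finset.sum_congr rfl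
      intro j hj
      rw [Finset.mem_Icc] at hj
      have e1 : K - j = (K - e) + (e - j) := by omega
      have e2 : ∀ x : R, x ^ K = x ^ (K - e) * x ^ e := by
        intro x; rw [← pow_add]; congr 1; omega
      rw [e1, e2, e2, mul_pow, pow_add, pow_add]
      ring
    rw [Finset.sum_congr rfl inner]
    apply Finset.sum_bij' (i := fun i _ => K - i) (j := fun j _ => K - j)
    · intro i hi; simp only [Finset.mem_range, Finset.mem_Icc] at *; omega
    · intro i hi; simp only [Finset.mem_range, Finset.mem_Icc] at *; omega
    · intro i hi; simp only [Finset.mem_range] at *; omega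
    · intro i hi; simp only [Finset.mem_Icc] at *; omega
    · intro i hi
      simp only [Finset.mem_range] at hi
      rw [show K - (K - i) = i by omega]
      simp

end

section

open Polynomial

section gain
variable (p : ℕ) [hp : Fact p.Prime]

/-- extraction of coefficients with index `≡ -1 mod p` -/
noncomputable def Lam (h : (ZMod p)[X]) : (ZMod p)[X] := divX (contract p (X * h))

lemma Lam_coeff (h : (ZMod p)[X]) (m : ℕ) : (Lam p h).coeff m = h.coeff (m * p + (p - 1)) := by
  have h0 : p ≠ 0 := hp.out.ne_zero
  have h1 : 1 ≤ p := hp.out.one_lt.le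
  unfold Lam
  rw [coeff_divX, coeff_contract h0, show (m + 1) * p = (m * p + (p - 1)) + 1 by
    rw [add_mul]; omega, coeff_X_mul]

lemma Lam_add (h k : (ZMod p)[X]) : Lam p (h + k) = Lam p h + Lam p k := by
  ext m; simp only [Lam_coeff, coeff_add]

lemma Lam_smul (c : ZMod p) (h : (ZMod p)[X]) : Lam p (C c * h) = C c * Lam p h := by
  ext m; simp only [Lam_coeff, coeff_C_mul]

lemma Lam_sum {ι : Type*} (s : Finset ι) (h : ι → (ZMod p)[X]) :
    Lam p (∑ i ∈ s, h i) = ∑ i ∈ s, Lam p (h i) := by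
  ext m; simp only [Lam_coeff, finsetSum_coeff]

lemma Lam_mul_pow (h a : (ZMod p)[X]) : Lam p (h * a ^ p) = Lam p h * a := by
  have h0 : p ≠ 0 := hp.out.ne_zero
  have key : ∀ h : (ZMod p)[X], X * Lam p h = contract p (X * h) := by
    intro h
    unfold Lam
    have := divX_mul_X_add (contract p (X * h))
    rw [coeff_contract h0, zero_mul, mul_coeff_zero, coeff_X_zero, zero_mul, C_0, add_zero] at this
    rw [mul_comm, this]
  have hX : (X : (ZMod p)[X]) ≠ 0 := X_ne_zero
  apply mul_left_cancel₀ hX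
  rw [key, ← mul_assoc, ← ZMod.expand_card, contract_mul_expand h0, ← key, mul_assoc]

lemma Lam_low (h : (ZMod p)[X]) (hd : h.natDegree < p - 1) : Lam p h = 0 := by
  ext m
  rw [Lam_coeff, coeff_zero]
  apply coeff_eq_zero_of_natDegree_lt
  have : 0 ≤ m * p := Nat.zero_le _
  omega

lemma Lam_mid (h : (ZMod p)[X]) (hd : h.natDegree < 2 * p - 1) : Lam p h = C (h.coeff (p - 1)) := by
  ext m
  rw [Lam_coeff, coeff_C]
  split_ifs with hm
  · simp [hm]
  · apply coeff_eq_zero_of_natDegree_lt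
    have : 1 * p ≤ m * p := Nat.mul_le_mul_right p (by omega)
    omega

lemma Lam_lin (u : (ZMod p)[X]) (hu : u = X ∨ u = 1 - X) (hodd : p % 2 = 1) (i : ℕ) (hi : i ≤ 2 * p - 1) :
    Lam p (u ^ i) = if i = 2 * p - 1 then u else if i = p - 1 then 1 else 0 := by
  have h1 : 1 < p := hp.out.one_lt
  have hd : u.natDegree ≤ 1 := by
    rcases hu with rfl | rfl
    · exact natDegree_X_le
    · compute_degree
  have hd' : ∀ i, (u ^ i).natDegree ≤ i := by
    intro i
    have := natDegree_pow_le (p := u) (n := i)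
    nlinarith
  have small : ∀ i, i < p → Lam p (u ^ i) = if i = p - 1 then 1 else 0 := by
    intro i hi
    split_ifs with h
    · rw [Lam_mid p _ ((hd' i).trans_lt (by omega)), h]
      have : (u ^ (p - 1)).coeff (p - 1) = 1 := by
        rcases hu with rfl | rfl
        · simp
        · have h3 := coeff_pow_of_natDegree_le (p := (1 - X : (ZMod p)[X])) (n := 1) (m := p - 1) hd
          rw [mul_one] at h3
          rw [h3]
          have : (1 - X : (ZMod p)[X]).coeff 1 = -1 := by simp [coeff_one]
          rw [this]
          apply Even.neg_one_pow
          rw [Nat.even_iff]; omega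
      rw [this, C_1]
    · exact Lam_low p _ ((hd' i).trans_lt (by omega))
  by_cases hip : i < p
  · rw [small i hip]
    rw [if_neg (show i ≠ 2 * p - 1 by omega)]
  · obtain ⟨k, rfl⟩ : ∃ k, i = k + p := ⟨i - p, by omega⟩
    rw [pow_add, Lam_mul_pow, small k (by omega)]
    rw [if_neg (show k + p ≠ p - 1 by omega)]
    by_cases hk : k = p - 1
    · rw [if_pos hk, if_pos (by omega), one_mul]
    · rw [if_neg hk, if_neg (by omega), zero_mul]

lemma Lam_anti (W : (ZMod p)[X]) (hodd : p % 2 = 1) (hd : W.natDegree < 2 * p - 1)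
    (hW : W.comp (1 - X) = - W) : Lam p W = 0 := by
  have h1 : 1 < p := hp.out.one_lt
  have e1 : W = ∑ i ∈ Finset.range (2 * p - 1), C (W.coeff i) * X ^ i := by
    conv_lhs => rw [as_sum_range_C_mul_X_pow' (p := W) hd]
  have e2 : W.comp (1 - X) = ∑ i ∈ Finset.range (2 * p - 1), C (W.coeff i) * (1 - X) ^ i := by
    conv_lhs => rw [e1]
    rw [Polynomial.sum_comp]
    simp
  have e3 : Lam p (W.comp (1 - X)) = Lam p W := by
    rw [e2]
    conv_rhs => rw [e1]
    rw [Lam_sum, Lam_sum]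
    apply Finset.sum_congr rfl
    intro i hi
    rw [Finset.mem_range] at hi
    rw [Lam_smul, Lam_smul, Lam_lin p _ (Or.inr rfl) hodd i (by omega),
      Lam_lin p _ (Or.inl rfl) hodd i (by omega), if_neg (show i ≠ 2 * p - 1 by omega), if_neg (show i ≠ 2 * p - 1 by omega)]
  have e4 : Lam p (-W) = - Lam p W := by
    ext m; simp only [Lam_coeff, coeff_neg]
  rw [hW, e4] at e3
  have h2 : (2 : ZMod p) ≠ 0 := by
    intro h
    have : ((2 : ℕ) : ZMod p) = 0 := by exact_mod_cast h
    rw [ZMod.natCast_eq_zero_iff] at this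
    have := Nat.le_of_dvd (by norm_num) this
    omega
  ext m
  have := congrArg (fun q => coeff q m) e3
  simp only [coeff_neg] at this
  rw [coeff_zero]
  have h3 : (2 : ZMod p) * (Lam p W).coeff m = 0 := by linear_combination -this
  exact (mul_eq_zero.mp h3).resolve_left h2

set_option maxHeartbeats 1600000 in
lemma gain_main (n : ℕ) (hn : 1 ≤ n) (h7 : 7 * n < p) (h8 : p ≤ 8 * n) :
    ((gg n (p + 1) : ℤ) : ZMod p) = 0 ∧ Lam p ((EE n).map (Int.castRingHom (ZMod p))) = 0 := by
  have hodd : p % 2 = 1 := by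
    rcases hp.out.eq_two_or_odd with h | h
    · omega
    · exact h
  set K := 14 * n + 1 with hK
  set E := (EE n).map (Int.castRingHom (ZMod p)) with hE
  set Q : (ZMod p)[X] := eval₂ (Int.castRingHom _) (X * (1 - X)) fq with hQ
  set W : (ZMod p)[X] := Q ^ (8 * n - p) * (1 - 2 * X) ^ (14 * n - p) * (X * (1 - X)) ^ (2 * p - K) with hWdef
  have hQe : Q = 42 - 350 * (X * (1 - X)) + 729 * (X * (1 - X)) ^ 2 := by
    rw [hQ]; unfold fq
    simp [eval₂_add, eval₂_sub, eval₂_mul]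
  have PI := PI_identity n (X : (ZMod p)[X]) (1 - X) (by ring)
  have hEe : eval₂ (Int.castRingHom (ZMod p)[X]) X (EE n) = E := by
    rw [hE, map]
    congr 1
  rw [hEe, ← hK] at PI
  have hfl : eval₂ (Int.castRingHom (ZMod p)[X]) (X * (1 - X)) fl = (1 - 2 * X) ^ 2 := by
    unfold fl
    rw [eval₂_sub, eval₂_mul, eval₂_one, eval₂_X, eval₂_C]
    simp only [map_ofNat]
    ring
  have hff : eval₂ (Int.castRingHom (ZMod p)[X]) (X * (1 - X)) (ff n) =
      Q ^ (8 * n) * (1 - 2 * X) ^ (14 * n) := by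
    unfold ff
    rw [eval₂_mul, eval₂_pow, eval₂_pow, hfl, ← pow_mul, ← hQ]
    congr 2; ring
  rw [hff] at PI
  have main : W * (Q * (1 - 2 * X)) ^ p = E * ((X * (1 - X)) ^ 2) ^ p
      + (∑ j ∈ Finset.Icc 1 K, C ((gg n j : ℤ) : ZMod p) * X ^ (2 * p - j)) * ((1 - X) ^ 2) ^ p
      + (∑ j ∈ Finset.Icc 1 K, C ((gg n j : ℤ) : ZMod p) * (1 - X) ^ (2 * p - j)) * (X ^ 2) ^ p := by
    have e1 : W * (Q * (1 - 2 * X)) ^ p = (Q ^ (8 * n) * (1 - 2 * X) ^ (14 * n)) * (X * (1 - X)) ^ (2 * p - K) := by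
      have : Q ^ (8 * n) = Q ^ (8 * n - p) * Q ^ p := by rw [← pow_add]; congr 1; omega
      have h' : (1 - 2 * X : (ZMod p)[X]) ^ (14 * n) = (1 - 2 * X) ^ (14 * n - p) * (1 - 2 * X) ^ p := by
        rw [← pow_add]; congr 1; omega
      rw [this, h', hWdef, mul_pow Q]; ring
    rw [e1, PI, add_mul, add_assoc]
    congr 1
    · have : ((X * (1 - X)) ^ 2 : (ZMod p)[X]) ^ p = (X * (1 - X)) ^ K * (X * (1 - X)) ^ (2 * p - K) := by
        rw [← pow_mul, ← pow_add]; congr 1; omega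
      rw [this]; ring
    · rw [Finset.sum_mul, Finset.sum_mul, Finset.sum_mul, ← Finset.sum_add_distrib]
      apply Finset.sum_congr rfl
      intro j hj
      rw [Finset.mem_Icc] at hj
      have a1 : ∀ u : (ZMod p)[X], u ^ (2 * p - j) = u ^ (K - j) * u ^ (2 * p - K) := by
        intro u; rw [← pow_add]; congr 1; omega
      have a2 : ∀ u : (ZMod p)[X], (u ^ 2) ^ p = u ^ K * u ^ (2 * p - K) := by
        intro u; rw [← pow_mul, ← pow_add]; congr 1; omega
      rw [a1, a1, a2, a2, mul_pow]
      have : (C ((gg n j : ℤ) : ZMod p) : (ZMod p)[X]) = ((gg n j : ℤ) : (ZMod p)[X]) := by simp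
      rw [this]
      ring
  have hWd : W.natDegree < 2 * p - 1 := by
    have d1 : Q.natDegree ≤ 4 := by rw [hQe]; compute_degree
    have d2 : (1 - 2 * X : (ZMod p)[X]).natDegree ≤ 1 := by compute_degree
    have d3 : (X * (1 - X) : (ZMod p)[X]).natDegree ≤ 2 := by compute_degree
    have d1' := natDegree_pow_le_of_le (8 * n - p) d1
    have d2' := natDegree_pow_le_of_le (14 * n - p) d2
    have d3' := natDegree_pow_le_of_le (2 * p - K) d3
    have := natDegree_mul_le_of_le (natDegree_mul_le_of_le d1' d2') d3'
    refine this.trans_lt ?_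
    omega
  have hWa : W.comp (1 - X) = - W := by
    rw [hWdef, hQe]
    simp only [mul_comp, pow_comp, sub_comp, add_comp, one_comp, X_comp, ofNat_comp, Nat.cast_ofNat]
    have e1 : (1 - X : (ZMod p)[X]) * (1 - (1 - X)) = X * (1 - X) := by ring
    have e2 : (1 : (ZMod p)[X]) - 2 * (1 - X) = - (1 - 2 * X) := by ring
    rw [e1, e2, Odd.neg_pow (by rw [Nat.odd_iff]; omega)]
    ring
  have hL := congrArg (Lam p) main
  rw [Lam_mul_pow, Lam_anti p W hodd hWd hWa, zero_mul, Lam_add, Lam_add, Lam_mul_pow, Lam_mul_pow,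
    Lam_mul_pow, Lam_sum, Lam_sum] at hL
  have hs : ∀ u : (ZMod p)[X], (u = X ∨ u = 1 - X) →
      ∑ j ∈ Finset.Icc 1 K, Lam p (C ((gg n j : ℤ) : ZMod p) * u ^ (2 * p - j)) =
      C ((gg n 1 : ℤ) : ZMod p) * u + C ((gg n (p + 1) : ℤ) : ZMod p) := by
    intro u hu
    have : ∀ j ∈ Finset.Icc 1 K, Lam p (C ((gg n j : ℤ) : ZMod p) * u ^ (2 * p - j)) =
        (if j = 1 then C ((gg n 1 : ℤ) : ZMod p) * u else 0) +
        (if j = p + 1 then C ((gg n (p + 1) : ℤ) : ZMod p) else 0) := by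
      intro j hj
      rw [Finset.mem_Icc] at hj
      rw [Lam_smul, Lam_lin p u hu hodd _ (by omega)]
      by_cases h1 : j = 1
      · subst h1
        rw [if_pos rfl, if_pos rfl, if_neg (by omega), add_zero]
      · rw [if_neg (by omega), if_neg h1, zero_add]
        by_cases h2 : j = p + 1
        · rw [if_pos (by omega), if_pos h2, h2, mul_one]
        · rw [if_neg (by omega), if_neg h2, mul_zero]
    rw [Finset.sum_congr rfl this, Finset.sum_add_distrib, Finset.sum_ite_eq', Finset.sum_ite_eq',
      if_pos (by rw [Finset.mem_Icc]; omega), if_pos (by rw [Finset.mem_Icc]; omega)]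
  rw [hs X (Or.inl rfl), hs (1 - X) (Or.inr rfl)] at hL
  have g2 : ((gg n (p + 1) : ℤ) : ZMod p) = 0 := by
    have := congrArg (eval 0) hL
    simpa using this.symm
  have g1 : ((gg n 1 : ℤ) : ZMod p) = 0 := by
    rw [g2] at hL
    have h3 : (X : (ZMod p)[X]) * 0 = X * (Lam p E * (X * (1 - X) ^ 2) + C ((gg n 1 : ℤ) : ZMod p) * (1 - X) ^ 2
        + C ((gg n 1 : ℤ) : ZMod p) * (1 - X) * X) := by
      rw [mul_zero, hL, C_0]; ring
    have := congrArg (eval 0) (mul_left_cancel₀ X_ne_zero h3)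
    simpa using this.symm
  refine ⟨g2, ?_⟩
  rw [g1, g2, C_0] at hL
  have h4 : Lam p E * (X * (1 - X)) ^ 2 = 0 := by rw [hL]; ring
  refine (mul_eq_zero.mp h4).resolve_right ?_
  apply pow_ne_zero
  apply mul_ne_zero X_ne_zero
  intro h
  have := congrArg (eval 0) h
  simp at this

end gain

lemma gain_g (p n : ℕ) (hp : p.Prime) (hn : 1 ≤ n) (h7 : 7 * n < p) (h8 : p ≤ 8 * n) :
    (p : ℤ) ∣ gg n (p + 1) := by
  have := Fact.mk hp
  exact (ZMod.intCast_zmod_eq_zero_iff_dvd _ _).mp (gain_main p n hn h7 h8).1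

lemma gain_e (p n k : ℕ) (hp : p.Prime) (hn : 1 ≤ n) (h7 : 7 * n < p) (h8 : p ≤ 8 * n) (hk : p ∣ k + 1) :
    (p : ℤ) ∣ (EE n).coeff k := by
  have := Fact.mk hp
  have h := (gain_main p n hn h7 h8).2
  obtain ⟨m, hm⟩ := hk
  have hm1 : 1 ≤ m := by
    rcases Nat.eq_zero_or_pos m with h | h
    · subst h; omega
    · exact h
  have h1 := congrArg (fun q => coeff q (m - 1)) h
  simp only [Lam_coeff, coeff_zero, coeff_map] at h1
  have h2 : (m - 1) * p + (p - 1) = k := by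
    obtain ⟨m, rfl⟩ : ∃ m', m = m' + 1 := ⟨m - 1, by omega⟩
    have := hp.one_lt
    simp only [Nat.add_sub_cancel]
    have : p * (m + 1) = m * p + p := by ring
    omega
  rw [h2] at h1
  exact (ZMod.intCast_zmod_eq_zero_iff_dvd _ _).mp (by simpa using h1)

end

section

open Polynomial

/-- product of gained primes -/
def PP (n : ℕ) : ℕ := ∏ p ∈ (Finset.Ioc (7 * n) (8 * n)).filter Nat.Prime, p
/-- lcm quotient -/
noncomputable def LP (n : ℕ) : ℕ := Nat.lcmUpto (18 * n) / PP n

lemma dvd_lcmUpto {d N : ℕ} (h1 : 1 ≤ d) (h2 : d ≤ N) : d ∣ Nat.lcmUpto N := by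
  unfold Nat.lcmUpto
  exact Finset.dvd_lcm (f := id) (Finset.mem_Icc.mpr ⟨h1, h2⟩)

lemma PP_dvd (n : ℕ) : PP n ∣ Nat.lcmUpto (18 * n) := by
  unfold PP
  apply Finset.prod_primes_dvd
  · intro p hp
    exact (Finset.mem_filter.mp hp).2.prime
  · intro p hp
    have := Finset.mem_filter.mp hp
    rw [Finset.mem_Ioc] at this
    apply dvd_lcmUpto this.2.one_lt.le
    omega

lemma LP_mul (n : ℕ) : LP n * PP n = Nat.lcmUpto (18 * n) := Nat.div_mul_cancel (PP_dvd n)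

lemma LP_dvd_of_coprime {n d : ℕ} (h1 : 1 ≤ d) (h2 : d ≤ 18 * n)
    (h : ∀ p, p.Prime → 7 * n < p → p ≤ 8 * n → ¬ p ∣ d) : d ∣ LP n := by
  have hc : Nat.Coprime d (PP n) := by
    unfold PP
    apply Nat.Coprime.prod_right
    intro p hp
    have := Finset.mem_filter.mp hp
    rw [Finset.mem_Ioc] at this
    rw [Nat.coprime_comm, this.2.coprime_iff_not_dvd]
    exact h p this.2 this.1.1 this.1.2
  apply hc.dvd_of_dvd_mul_right
  rw [LP_mul]
  exact dvd_lcmUpto h1 h2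

lemma key_dvd (n d : ℕ) (h1 : 1 ≤ d) (h2 : d ≤ 18 * n) (M z : ℤ) (hM : M ∣ z)
    (hMp : ∀ p : ℕ, p.Prime → 7 * n < p → IsCoprime (p : ℤ) M)
    (hg : ∀ p : ℕ, p.Prime → 7 * n < p → p ≤ 8 * n → p ∣ d → (p : ℤ) ∣ z) :
    (d : ℤ) * M ∣ (LP n : ℤ) * z := by
  by_cases h : ∃ p, p.Prime ∧ 7 * n < p ∧ p ≤ 8 * n ∧ p ∣ d
  · obtain ⟨p, hp, h7, h8, c, rfl⟩ := h
    have hc3 : c < 3 := by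
      by_contra hc
      have : p * 3 ≤ p * c := Nat.mul_le_mul_left p (by omega)
      omega
    have hc : c ∣ LP n := by
      have hc0 : 1 ≤ c := by
        rcases Nat.eq_zero_or_pos c with h | h
        · subst h; omega
        · exact h
      apply LP_dvd_of_coprime hc0
      · have : 1 * c ≤ p * c := Nat.mul_le_mul_right c hp.one_lt.le
        omega
      · intro q hq hq7 _ hqc
        have := Nat.le_of_dvd hc0 hqc
        omega
    have hpM : (p : ℤ) * M ∣ z := (hMp p hp h7).mul_dvd (hg p hp h7 h8 ⟨c, rfl⟩) hM
    have hc' : (c : ℤ) ∣ (LP n : ℤ) := by exact_mod_cast hc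
    have := mul_dvd_mul hc' hpM
    refine dvd_trans (dvd_of_eq ?_) this
    push_cast; ring
  · push Not at h
    have : d ∣ LP n := LP_dvd_of_coprime h1 h2 h
    have h' : (d : ℤ) ∣ (LP n : ℤ) := by exact_mod_cast this
    exact mul_dvd_mul h' hM

/-- conjugate pairs in `ℤ[√7]` -/
def QI (x y : ℝ) : Prop := ∃ a b : ℤ, x = a + b * √7 ∧ y = a - b * √7

lemma s7 : √7 * √7 = (7 : ℝ) := Real.mul_self_sqrt (by norm_num)

lemma QI_mul {x y x' y' : ℝ} (h : QI x y) (h' : QI x' y') : QI (x * x') (y * y') := by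
  obtain ⟨a, b, rfl, rfl⟩ := h
  obtain ⟨a', b', rfl, rfl⟩ := h'
  refine ⟨a * a' + 7 * (b * b'), a * b' + b * a', ?_, ?_⟩ <;> push_cast <;>
    linear_combination ((b : ℝ) * b') * s7

lemma QI_pow {x y : ℝ} (h : QI x y) (k : ℕ) : QI (x ^ k) (y ^ k) := by
  induction k with
  | zero => exact ⟨1, 0, by simp, by simp⟩
  | succ k ih => rw [pow_succ, pow_succ]; exact QI_mul ih h

/-- integers among reals -/
noncomputable abbrev ZR : Subring ℝ := (Int.castRingHom ℝ).range

lemma QI_sub {x y : ℝ} (h : QI x y) : √7 * (x - y) ∈ ZR := by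
  obtain ⟨a, b, rfl, rfl⟩ := h
  refine ⟨14 * b, ?_⟩
  simp only [eq_intCast]
  push_cast
  linear_combination (-2 * (b : ℝ)) * s7

lemma int_mem (a : ℤ) : (a : ℝ) ∈ ZR := ⟨a, by simp⟩

/-- upper end point -/
noncomputable def Yp : ℝ := (13 + √7) / 27
/-- lower end point -/
noncomputable def Ym : ℝ := (13 - √7) / 27

lemma s7_lt : √7 < 2.6458 := by
  rw [Real.sqrt_lt' (by norm_num)]; norm_num
lemma s7_gt : 2.6457 < √7 := by
  rw [Real.lt_sqrt (by norm_num)]; norm_num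

lemma Yp_inv : Yp⁻¹ = (13 - √7) / 6 := by
  unfold Yp
  have : (13 + √7) ≠ 0 := by positivity
  field_simp
  linear_combination s7
lemma Ym_inv : Ym⁻¹ = (13 + √7) / 6 := by
  unfold Ym
  have : (13 - √7) ≠ 0 := by linarith [s7_lt]
  field_simp
  linear_combination s7
lemma Yp_inv' : (1 - Yp)⁻¹ = (14 + √7) / 7 := by
  rw [show 1 - Yp = (14 - √7) / 27 by unfold Yp; ring]
  have : (14 - √7) ≠ 0 := by linarith [s7_lt]
  field_simp
  linear_combination s7
lemma Ym_inv' : (1 - Ym)⁻¹ = (14 - √7) / 7 := by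
  rw [show 1 - Ym = (14 + √7) / 27 by unfold Ym; ring]
  have : (14 + √7) ≠ 0 := by positivity
  field_simp
  linear_combination s7

lemma QI_Y (k : ℕ) : QI (27 ^ k * Yp ^ k) (27 ^ k * Ym ^ k) := by
  rw [← mul_pow, ← mul_pow]
  apply QI_pow
  refine ⟨13, 1, ?_, ?_⟩
  · unfold Yp; push_cast; ring
  · unfold Ym; push_cast; ring

lemma QI_Yinv (s : ℕ) : QI (3 ^ s * 2 ^ ((s + 1) / 2) * (Yp⁻¹) ^ s) (3 ^ s * 2 ^ ((s + 1) / 2) * (Ym⁻¹) ^ s) := by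
  have h2 : QI (18 * (Yp⁻¹) ^ 2) (18 * (Ym⁻¹) ^ 2) := by
    refine ⟨88, -13, ?_, ?_⟩
    · rw [Yp_inv]; push_cast; linear_combination (1 / 2) * s7
    · rw [Ym_inv]; push_cast; linear_combination (1 / 2) * s7
  have h1 : QI (6 * (Yp⁻¹)) (6 * (Ym⁻¹)) := by
    refine ⟨13, -1, ?_, ?_⟩
    · rw [Yp_inv]; push_cast; ring
    · rw [Ym_inv]; push_cast; ring
  have e : ∀ t : ℕ, (18 : ℝ) ^ t = 3 ^ (2 * t) * 2 ^ t := by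
    intro t; rw [pow_mul, ← mul_pow]; norm_num
  rcases Nat.even_or_odd' s with ⟨t, rfl | rfl⟩
  · have := QI_pow h2 t
    rw [mul_pow, mul_pow, ← pow_mul, ← pow_mul, e] at this
    rwa [show (2 * t + 1) / 2 = t by omega]
  · have := QI_mul (QI_pow h2 t) h1
    rw [mul_pow, mul_pow, ← pow_mul, ← pow_mul, e] at this
    rw [show (2 * t + 1 + 1) / 2 = t + 1 by omega]
    convert this using 1 <;> ring

lemma QI_Yinv' (s : ℕ) : QI (7 ^ ((s + 1) / 2) * ((1 - Yp)⁻¹) ^ s) (7 ^ ((s + 1) / 2) * ((1 - Ym)⁻¹) ^ s) := by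
  have h2 : QI (7 * ((1 - Yp)⁻¹) ^ 2) (7 * ((1 - Ym)⁻¹) ^ 2) := by
    refine ⟨29, 4, ?_, ?_⟩
    · rw [Yp_inv']; push_cast; linear_combination (1 / 7) * s7
    · rw [Ym_inv']; push_cast; linear_combination (1 / 7) * s7
  have h1 : QI (7 * ((1 - Yp)⁻¹)) (7 * ((1 - Ym)⁻¹)) := by
    refine ⟨14, 1, ?_, ?_⟩
    · rw [Yp_inv']; push_cast; ring
    · rw [Ym_inv']; push_cast; ring
  rcases Nat.even_or_odd' s with ⟨t, rfl | rfl⟩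
  · have := QI_pow h2 t
    rw [mul_pow, mul_pow, ← pow_mul, ← pow_mul] at this
    rwa [show (2 * t + 1) / 2 = t by omega]
  · have := QI_mul (QI_pow h2 t) h1
    rw [mul_pow, mul_pow, ← pow_mul, ← pow_mul] at this
    rw [show (2 * t + 1 + 1) / 2 = t + 1 by omega]
    convert this using 1 <;> ring

/-- denominators -/
noncomputable def Dn (n : ℕ) : ℕ := LP n * 3 ^ (6 * n)

lemma prime_coprime {n p q : ℕ} (hn : 1 ≤ n) (hp : p.Prime) (h7 : 7 * n < p) (hq : q.Prime) (hq7 : q ≤ 7) (k : ℕ) :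
    IsCoprime (p : ℤ) ((q : ℤ) ^ k) := by
  apply IsCoprime.pow_right
  rw [Nat.isCoprime_iff_coprime]
  rw [Nat.coprime_primes hp hq]
  omega

lemma combine {n d : ℕ} {M z : ℤ} (hd : 1 ≤ d) (h : (d : ℤ) * M ∣ (LP n : ℤ) * (3 ^ (6 * n) * z)) {x y : ℝ}
    (hq : QI (M * x) (M * y)) : (Dn n : ℝ) * (√7 * ((z : ℝ) / d * (x - y))) ∈ ZR := by
  obtain ⟨t, ht⟩ := h
  have hd0 : (d : ℝ) ≠ 0 := by positivity
  have ht' : (LP n : ℝ) * (3 ^ (6 * n) * (z : ℝ)) = d * M * t := by exact_mod_cast ht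
  have e : (Dn n : ℝ) * (√7 * ((z : ℝ) / d * (x - y))) = t * (√7 * (M * x - M * y)) := by
    unfold Dn
    push_cast
    field_simp
    linear_combination (x - y) * ht'
  rw [e]
  exact mul_mem (int_mem t) (QI_sub hq)

lemma term_e (n k : ℕ) (hn : 1 ≤ n) (hk : k ≤ 18 * n - 2) :
    (Dn n : ℝ) * (√7 * (((EE n).coeff k : ℝ) / ((k + 1 : ℕ) : ℝ) * (Yp ^ (k + 1) - Ym ^ (k + 1)))) ∈ ZR := by
  apply combine (M := 27 ^ (k + 1)) (by omega)
  · apply key_dvd n (k + 1) (by omega) (by omega) _ _ (EE_27 n k)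
    · intro p hp h7
      have := prime_coprime hn hp h7 Nat.prime_three (by norm_num) (3 * (k + 1))
      rw [pow_mul] at this
      exact_mod_cast this
    · intro p hp h7 h8 hd
      exact Dvd.dvd.mul_left (gain_e p n k hp hn h7 h8 hd) _
  · have := QI_Y (k + 1)
    exact_mod_cast this

lemma gain_s {n s : ℕ} (hn : 1 ≤ n) (hs1 : 1 ≤ s) (hs : s ≤ 14 * n) (p : ℕ) (hp : p.Prime) (h7 : 7 * n < p) (h8 : p ≤ 8 * n)
    (hd : p ∣ s) : (p : ℤ) ∣ 3 ^ (6 * n) * gg n (s + 1) := by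
  obtain ⟨c, rfl⟩ := hd
  have hc : c = 1 := by
    rcases c with _ | _ | c
    · omega
    · rfl
    · have : p * 2 ≤ p * (c + 1 + 1) := Nat.mul_le_mul_left p (by omega)
      omega
  subst hc
  rw [mul_one]
  exact Dvd.dvd.mul_left (gain_g p n hp hn h7 h8) _

lemma term_g1 (n s : ℕ) (hn : 1 ≤ n) (hs1 : 1 ≤ s) (hs : s ≤ 14 * n) :
    (Dn n : ℝ) * (√7 * ((gg n (s + 1) : ℝ) / (s : ℝ) * (Yp⁻¹ ^ s - Ym⁻¹ ^ s))) ∈ ZR := by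
  apply combine (M := 3 ^ s * 2 ^ ((s + 1) / 2)) hs1
  · apply key_dvd n s hs1 (by omega)
    · apply IsCoprime.mul_dvd
      · apply IsCoprime.pow; norm_num
      · exact gg_3 n (s + 1) (by omega)
      · apply Dvd.dvd.mul_left
        refine dvd_trans ?_ (gg_14 n (s + 1))
        exact pow_dvd_pow_of_dvd (by norm_num) _
    · intro p hp h7
      apply IsCoprime.mul_right
      · exact_mod_cast prime_coprime hn hp h7 Nat.prime_three (by norm_num) s
      · exact_mod_cast prime_coprime hn hp h7 Nat.prime_two (by norm_num) ((s + 1) / 2)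
    · exact gain_s hn hs1 hs
  · have := QI_Yinv s
    exact_mod_cast this

lemma term_g2 (n s : ℕ) (hn : 1 ≤ n) (hs1 : 1 ≤ s) (hs : s ≤ 14 * n) :
    (Dn n : ℝ) * (√7 * ((gg n (s + 1) : ℝ) / (s : ℝ) * ((1 - Yp)⁻¹ ^ s - (1 - Ym)⁻¹ ^ s))) ∈ ZR := by
  apply combine (M := 7 ^ ((s + 1) / 2)) hs1
  · apply key_dvd n s hs1 (by omega)
    · apply Dvd.dvd.mul_left
      refine dvd_trans ?_ (gg_14 n (s + 1))
      exact pow_dvd_pow_of_dvd (by norm_num) _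
    · intro p hp h7
      exact_mod_cast prime_coprime hn hp h7 (by norm_num : Nat.Prime 7) (by norm_num) ((s + 1) / 2)
    · exact gain_s hn hs1 hs
  · have := QI_Yinv' s
    exact_mod_cast this

end

section

open Polynomial

/-- integrand -/
noncomputable def FF (n : ℕ) (y : ℝ) : ℝ :=
  (42 - 350 * (y * (1 - y)) + 729 * (y * (1 - y)) ^ 2) ^ (8 * n) * (1 - 4 * (y * (1 - y))) ^ (7 * n) /
    (y * (1 - y)) ^ (14 * n + 1)

/-- the integral -/
noncomputable def II (n : ℕ) : ℝ := ∫ y in Ym..Yp, FF n y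

/-- antiderivatives -/
noncomputable def hh (j : ℕ) (y : ℝ) : ℝ :=
  if j = 1 then Real.log y - Real.log (1 - y) else
    ((1 - y)⁻¹ ^ (j - 1) - y⁻¹ ^ (j - 1)) / ((j - 1 : ℕ) : ℝ)

lemma hh_deriv (j : ℕ) (hj : 1 ≤ j) (y : ℝ) (h0 : 0 < y) (h1 : y < 1) :
    HasDerivAt (hh j) (y⁻¹ ^ j + (1 - y)⁻¹ ^ j) y := by
  have hy : y ≠ 0 := h0.ne'
  have hy' : 1 - y ≠ 0 := by linarith
  have d1 : HasDerivAt (fun y : ℝ => 1 - y) (-1) y := by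
    simpa using (hasDerivAt_id y).const_sub 1
  by_cases h : j = 1
  · subst h
    have : hh 1 = fun y => Real.log y - Real.log (1 - y) := by
      ext y; simp [hh]
    rw [this]
    have := (Real.hasDerivAt_log hy).sub (d1.log hy')
    refine HasDerivAt.congr_deriv (f' := _) this ?_
    field_simp
    ring
  · obtain ⟨s, rfl⟩ : ∃ s, j = s + 2 := ⟨j - 2, by omega⟩
    have : hh (s + 2) = fun y => ((1 - y)⁻¹ ^ (s + 1) - y⁻¹ ^ (s + 1)) / ((s + 1 : ℕ) : ℝ) := by
      ext y; simp [hh]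
    rw [this]
    have := (((d1.inv hy').pow (s + 1)).sub ((hasDerivAt_inv hy).pow (s + 1))).div_const ((s + 1 : ℕ) : ℝ)
    refine HasDerivAt.congr_deriv (f' := _) this ?_
    have hs : ((s + 1 : ℕ) : ℝ) ≠ 0 := by positivity
    simp only [Nat.add_sub_cancel, inv_pow, Pi.inv_apply]
    field_simp
    ring

lemma FF_eq (n : ℕ) (y : ℝ) (h0 : 0 < y) (h1 : y < 1) :
    FF n y = ∑ k ∈ Finset.range (18 * n + 1), ((EE n).coeff k : ℝ) * y ^ k +
      ∑ j ∈ Finset.Icc 1 (14 * n + 1), (gg n j : ℝ) * (y⁻¹ ^ j + (1 - y)⁻¹ ^ j) := by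
  have hy : y ≠ 0 := h0.ne'
  have hy' : 1 - y ≠ 0 := by linarith
  have hdeg : (EE n).natDegree < 18 * n + 1 := by
    rcases Nat.eq_zero_or_pos n with h | h
    · subst h; simp [EE]
    · have := EE_deg n h; omega
  have PI := PI_identity n y (1 - y) (by ring)
  rw [eval₂_eq_sum_range' (Int.castRingHom ℝ) hdeg] at PI
  have e1 : eval₂ (Int.castRingHom ℝ) (y * (1 - y)) (ff n) =
      (42 - 350 * (y * (1 - y)) + 729 * (y * (1 - y)) ^ 2) ^ (8 * n) * (1 - 4 * (y * (1 - y))) ^ (7 * n) := by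
    unfold ff fq fl
    simp [eval₂_add, eval₂_sub, eval₂_mul, eval₂_pow]
  rw [e1] at PI
  unfold FF
  rw [PI, add_div]
  congr 1
  · field_simp
    simp
  · rw [Finset.sum_div]
    apply Finset.sum_congr rfl
    intro j hj
    rw [Finset.mem_Icc] at hj
    obtain ⟨i, hi⟩ : ∃ i, 14 * n + 1 = i + j := ⟨14 * n + 1 - j, by omega⟩
    rw [hi, Nat.add_sub_cancel, inv_pow, inv_pow, mul_pow, pow_add, pow_add]
    field_simp

/-- full antiderivative -/
noncomputable def GG (n : ℕ) (y : ℝ) : ℝ :=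
  ∑ k ∈ Finset.range (18 * n + 1), ((EE n).coeff k : ℝ) / ((k + 1 : ℕ) : ℝ) * y ^ (k + 1) +
      ∑ j ∈ Finset.Icc 1 (14 * n + 1), (gg n j : ℝ) * hh j y

lemma GG_deriv (n : ℕ) (y : ℝ) (h0 : 0 < y) (h1 : y < 1) : HasDerivAt (GG n) (FF n y) y := by
  rw [FF_eq n y h0 h1]
  unfold GG
  apply HasDerivAt.fun_add
  · apply HasDerivAt.fun_sum
    intro k _
    have := ((hasDerivAt_id y).pow (k + 1)).const_mul (((EE n).coeff k : ℝ) / ((k + 1 : ℕ) : ℝ))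
    refine HasDerivAt.congr_deriv (f' := _) this ?_
    have hs : ((k + 1 : ℕ) : ℝ) ≠ 0 := by positivity
    simp only [Nat.add_sub_cancel, id]
    field_simp
  · apply HasDerivAt.fun_sum
    intro j hj
    rw [Finset.mem_Icc] at hj
    exact (hh_deriv j hj.1 y h0 h1).const_mul _

lemma Ym_pos : 0.38 < Ym := by unfold Ym; linarith [s7_lt]
lemma Yp_lt : Yp < 0.58 := by unfold Yp; linarith [s7_lt]
lemma Ym_lt_Yp : Ym < Yp := by unfold Yp Ym; linarith [s7_gt]

lemma FF_cont (n : ℕ) : ContinuousOn (FF n) (Set.uIcc Ym Yp) := by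
  unfold FF
  apply ContinuousOn.div
  · fun_prop
  · fun_prop
  · intro y hy
    rw [Set.uIcc_of_le Ym_lt_Yp.le] at hy
    have h0 : 0 < y := by linarith [hy.1, Ym_pos]
    have h1 : 0 < 1 - y := by linarith [hy.2, Yp_lt]
    positivity

lemma II_eq (n : ℕ) : II n = GG n Yp - GG n Ym := by
  unfold II
  apply intervalIntegral.integral_eq_sub_of_hasDerivAt
  · intro y hy
    rw [Set.uIcc_of_le Ym_lt_Yp.le] at hy
    exact GG_deriv n y (by linarith [hy.1, Ym_pos]) (by linarith [hy.2, Yp_lt])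
  · exact (FF_cont n).intervalIntegrable

/-- the number -/
noncomputable def al : ℝ := √7 * Real.log ((√7 - 1) / (√7 + 1))

lemma hh_one : √7 * (hh 1 Yp - hh 1 Ym) = - al := by
  have a1 := s7_lt
  have a2 := s7_gt
  have p1 : 0 < Yp := by linarith [Ym_pos, Ym_lt_Yp]
  have p2 : 0 < Ym := by linarith [Ym_pos]
  have p3 : 0 < 1 - Yp := by linarith [Yp_lt]
  have p4 : 0 < 1 - Ym := by linarith [Yp_lt, Ym_lt_Yp]
  unfold hh al
  rw [if_pos rfl, if_pos rfl, ← mul_neg]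
  congr 1
  rw [← Real.log_div p1.ne' p3.ne', ← Real.log_div p2.ne' p4.ne', ← Real.log_div (by positivity) (by positivity),
    ← Real.log_inv, inv_div]
  congr 1
  have q1 : √7 - 1 ≠ 0 := by linarith
  rw [div_div_div_eq, div_eq_div_iff (by positivity) q1]
  unfold Yp Ym
  linear_combination (52 / 729) * s7

theorem form_int (n : ℕ) (hn : 1 ≤ n) :
    ∃ A : ℤ, (Dn n : ℝ) * (√7 * II n) = A - (Dn n : ℝ) * (gg n 1 : ℝ) * al := by
  have h : (Dn n : ℝ) * (√7 * II n) + (Dn n : ℝ) * (gg n 1 : ℝ) * al ∈ ZR := by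
    rw [II_eq]
    unfold GG
    rw [← Finset.add_sum_erase (Finset.Icc 1 (14 * n + 1)) (fun j => (gg n j : ℝ) * hh j Yp)
      (a := 1) (by rw [Finset.mem_Icc]; omega), ← Finset.add_sum_erase (Finset.Icc 1 (14 * n + 1))
      (fun j => (gg n j : ℝ) * hh j Ym) (a := 1) (by rw [Finset.mem_Icc]; omega)]
    have e : (Dn n : ℝ) * (√7 * (∑ k ∈ Finset.range (18 * n + 1), ((EE n).coeff k : ℝ) / ((k + 1 : ℕ) : ℝ) * Yp ^ (k + 1) +
        ((gg n 1 : ℝ) * hh 1 Yp + ∑ j ∈ (Finset.Icc 1 (14 * n + 1)).erase 1, (gg n j : ℝ) * hh j Yp) -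
        (∑ k ∈ Finset.range (18 * n + 1), ((EE n).coeff k : ℝ) / ((k + 1 : ℕ) : ℝ) * Ym ^ (k + 1) +
        ((gg n 1 : ℝ) * hh 1 Ym + ∑ j ∈ (Finset.Icc 1 (14 * n + 1)).erase 1, (gg n j : ℝ) * hh j Ym)))) +
        (Dn n : ℝ) * (gg n 1 : ℝ) * al =
        ∑ k ∈ Finset.range (18 * n + 1), (Dn n : ℝ) * (√7 * (((EE n).coeff k : ℝ) / ((k + 1 : ℕ) : ℝ) * (Yp ^ (k + 1) - Ym ^ (k + 1))))
        + ∑ j ∈ (Finset.Icc 1 (14 * n + 1)).erase 1, (Dn n : ℝ) * (√7 * ((gg n j : ℝ) * (hh j Yp - hh j Ym))) := by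
      simp only [mul_sub, Finset.sum_sub_distrib, ← Finset.mul_sum]
      linear_combination (Dn n : ℝ) * (gg n 1 : ℝ) * hh_one
    rw [e]
    apply add_mem
    · apply sum_mem
      intro k hk
      by_cases hk2 : k ≤ 18 * n - 2
      · exact term_e n k hn hk2
      · rw [coeff_eq_zero_of_natDegree_lt ((EE_deg n hn).trans_lt (by omega))]
        simp
    · apply sum_mem
      intro j hj
      rw [Finset.mem_erase, Finset.mem_Icc] at hj
      obtain ⟨s, rfl⟩ : ∃ s, j = s + 1 := ⟨j - 1, by omega⟩
      have h1 := term_g1 n s hn (by omega) (by omega)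
      have h2 := term_g2 n s hn (by omega) (by omega)
      have := sub_mem h2 h1
      convert this using 1
      unfold hh
      rw [if_neg hj.1, if_neg hj.1, Nat.add_sub_cancel]
      ring
  obtain ⟨A, hA⟩ := h
  refine ⟨A, ?_⟩
  simp only [eq_intCast] at hA
  linarith

end

section

open Polynomial in
theorem dom_mul {p q P Q : ℤ[X]} (hp : ∀ i, |p.coeff i| ≤ P.coeff i) (hq : ∀ i, |q.coeff i| ≤ Q.coeff i) :
    ∀ i, |(p*q).coeff i| ≤ (P*Q).coeff i := by
  intro i
  rw [coeff_mul, coeff_mul]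
  refine (Finset.abs_sum_le_sum_abs _ _).trans (Finset.sum_le_sum fun x _ => ?_)
  rw [abs_mul]
  exact mul_le_mul (hp _) (hq _) (abs_nonneg _) ((abs_nonneg _).trans (hp _))

open Polynomial in
theorem dom_pow {p P : ℤ[X]} (hp : ∀ i, |p.coeff i| ≤ P.coeff i) (k : ℕ) :
    ∀ i, |(p^k).coeff i| ≤ (P^k).coeff i := by
  induction k with
  | zero => intro i; simp only [pow_zero, coeff_one]; split_ifs <;> simp
  | succ k ih => rw [pow_succ, pow_succ]; exact dom_mul ih hp

open Polynomial in
noncomputable def fabs (n : ℕ) : ℤ[X] := (C 42 + C 350*X + C 729*X^2)^(8*n) * (1 + C 4*X)^(7*n)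

open Polynomial in
theorem fabs_dom (n : ℕ) : ∀ i, |(ff n).coeff i| ≤ (fabs n).coeff i := by
  unfold ff fabs
  refine dom_mul (dom_pow ?_ _) (dom_pow ?_ _)
  · intro i
    unfold fq
    simp only [coeff_add, coeff_sub, coeff_C_mul, coeff_C, coeff_X, coeff_X_pow]
    rcases i with _ | _ | _ | i <;> simp
  · intro i
    unfold fl
    simp only [coeff_add, coeff_sub, coeff_C_mul, coeff_one, coeff_X]
    rcases i with _ | _ | i <;> simp

open Polynomial in
theorem g1_bound (n : ℕ) : |(gg n 1 : ℝ)| ≤ (8*2801^8)^n := by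
  have key : |(gg n 1 : ℝ)| ≤ ∑ m ∈ Finset.range (14*n+1), ((fabs n).coeff m : ℝ) * 4^(14*n-m) := by
    unfold gg
    push_cast
    refine (Finset.abs_sum_le_sum_abs _ _).trans ?_
    rw [← Finset.sum_range_reflect]
    rw [Finset.range_eq_Ico, Finset.sum_Ico_eq_sum_range] 
    have : Finset.Icc 1 (14*n+1) = Finset.Ico 1 (14*n+2) := by ext; simp; omega
    rw [this, Finset.sum_Ico_eq_sum_range]
    apply Finset.sum_le_sum
    intro i hi
    rw [Finset.mem_range] at hi
    rw [abs_mul]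
    have e1 : 14*n+1-(1+i) = 14*n+1-1-(0+i) := by omega
    have e2 : 2*(1+i)-1-1 = 2*i := by omega
    have e3 : 1+i-1 = i := by omega
    have e4 : 14*n - (14*n+1-1-(0+i)) = i := by omega
    rw [e1, e2, e3, e4]
    have h1 := fabs_dom n (14*n+1-1-(0+i))
    have h1' : |((ff n).coeff (14*n+1-1-(0+i)) : ℝ)| ≤ ((fabs n).coeff (14*n+1-1-(0+i)) : ℝ) := by exact_mod_cast h1
    have h2 : |(((2*i).choose i : ℕ) : ℝ)| ≤ 4^i := by
      rw [abs_of_nonneg (by positivity)]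
      have := Nat.choose_le_two_pow (2*i) i
      rw [pow_mul] at this
      exact_mod_cast this
    exact mul_le_mul h1' h2 (abs_nonneg _) ((abs_nonneg _).trans h1')
  have hnn : ∀ m, (0:ℝ) ≤ ((fabs n).coeff m : ℝ) := fun m => by
    have := (abs_nonneg _).trans (fabs_dom n m)
    exact_mod_cast this
  have k2 : ∑ m ∈ Finset.range (14*n+1), ((fabs n).coeff m : ℝ) * 4^(14*n-m)
      ≤ 4^(14*n) * (fabs n).eval₂ (Int.castRingHom ℝ) (1/4) := by
    rw [eval₂_eq_sum_range' (Int.castRingHom ℝ) (n := (fabs n).natDegree + 1 + (14*n+1)) (by omega), Finset.mul_sum]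
    refine le_trans ?_ (Finset.sum_le_sum_of_subset_of_nonneg (s := Finset.range (14*n+1)) ?_ ?_)
    · apply Finset.sum_le_sum
      intro i hi
      rw [Finset.mem_range] at hi
      have : (4:ℝ)^(14*n) = 4^(14*n-i) * 4^i := by rw [← pow_add]; congr 1; omega
      rw [this, one_div, inv_pow]
      simp only [eq_intCast]
      have h4 : (4:ℝ)^i ≠ 0 := by positivity
      apply le_of_eq
      field_simp
    · intro x; simp; omega
    · intro i _ _
      have := hnn i
      simp only [eq_intCast]
      positivity
  refine key.trans (k2.trans (le_of_eq ?_))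
  unfold fabs
  simp only [eval₂_mul, eval₂_pow, eval₂_add, eval₂_X, eval₂_C, eval₂_one]
  simp only [pow_mul, ← mul_pow]
  congr 1
  norm_num

end

section

theorem lin_exp (s x : ℝ) (hs : 0 < s) : x ≤ s⁻¹ * Real.exp (s * x - 1) := by
  have := Real.add_one_le_exp (s * x - 1)
  rw [inv_mul_eq_div, le_div_iff₀ hs]
  linarith

theorem inv_exp (w : ℝ) (hw : 0 ≤ w) (hw2 : w ≤ 9.6458) :
    1 / (4 + w / 42) ≤ 1 / 4 * Real.exp (-0.235 * (w / 42)) := by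
  have h := Real.add_one_le_exp (0.235 * (w / 42))
  have h2 : Real.exp (0.235 * (w/42)) ≤ (1 - 0.235 * (w/42))⁻¹ := by
    have h3 := Real.add_one_le_exp (-(0.235 * (w / 42)))
    rw [Real.exp_neg] at h3
    rw [le_inv_comm₀ (Real.exp_pos _) (by linarith)]
    linarith
  have e : (-0.235 : ℝ) * (w/42) = -(0.235 * (w/42)) := by ring
  rw [e, Real.exp_neg]
  have hp := Real.exp_pos (0.235 * (w/42))
  rw [div_le_iff₀ (by linarith), ← div_eq_mul_inv, div_mul_eq_mul_div, le_div_iff₀ hp]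
  refine (mul_le_mul_of_nonneg_left h2 (by norm_num)).trans ?_
  rw [one_mul, inv_le_iff_one_le_mul₀ (by linarith)]
  nlinarith

theorem exp_pow_mul (a x : ℝ) (k : ℕ) : (a * Real.exp x)^k = a^k * Real.exp (k * x) := by
  rw [mul_pow, ← Real.exp_nat_mul]

theorem core_bound (P w sa sb sw x y : ℝ) (hsa : 0 < sa) (hsb : 0 < sb) (hsw : 0 < sw)
    (hw : 0 ≤ w) (hw2 : w ≤ 9.6458) (hP0 : 0 ≤ P) (hP : P ≤ x * y) (hx : 0 ≤ x) (hy : 0 ≤ y) :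
    (P / 42)^8 * (w / 42)^7 * (1 / (4 + w/42))^9 ≤
      (sa⁻¹^8 * sb⁻¹^8 * sw⁻¹^7 / 42^15 / 4^9) *
        Real.exp (8 * (sa * x - 1) + 8 * (sb * y - 1) + 7 * (sw * w - 1) - 9 * 0.235 * (w / 42)) := by
  have h1 := pow_le_pow_left₀ hx (lin_exp sa x hsa) 8
  have h2 := pow_le_pow_left₀ hy (lin_exp sb y hsb) 8
  have h3 := pow_le_pow_left₀ hw (lin_exp sw w hsw) 7
  have h4 := pow_le_pow_left₀ (by positivity) (inv_exp w hw hw2) 9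
  have h5 := pow_le_pow_left₀ hP0 hP 8
  rw [exp_pow_mul] at h1 h2 h3 h4
  calc (P / 42)^8 * (w / 42)^7 * (1 / (4 + w/42))^9 
      = P^8 * w^7 * (1 / (4 + w/42))^9 / 42^15 := by ring
    _ ≤ (x * y)^8 * w^7 * (1 / (4 + w/42))^9 / 42^15 := by gcongr
    _ = (x^8 * y^8) * w^7 * (1 / (4 + w/42))^9 / 42^15 := by ring
    _ ≤ ((sa⁻¹^8 * Real.exp ((8:ℕ) * (sa * x - 1))) * (sb⁻¹^8 * Real.exp ((8:ℕ) * (sb * y - 1)))) *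
          (sw⁻¹^7 * Real.exp ((7:ℕ) * (sw * w - 1))) *
          ((1/4)^9 * Real.exp ((9:ℕ) * (-0.235 * (w / 42)))) / 42^15 := by
        gcongr
    _ = _ := by
        have : 8 * (sa * x - 1) + 8 * (sb * y - 1) + 7 * (sw * w - 1) - 9 * 0.235 * (w / 42)
          = ((8:ℕ):ℝ) * (sa * x - 1) + ((8:ℕ):ℝ) * (sb * y - 1) + ((7:ℕ):ℝ) * (sw * w - 1) + ((9:ℕ):ℝ) * (-0.235 * (w / 42)) := by
          push_cast; ring
        rw [this, Real.exp_add, Real.exp_add, Real.exp_add]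
        ring

theorem exp_nat_le (k : ℕ) : Real.exp k ≤ 2.7182818286^k := by
  have : Real.exp k = Real.exp 1 ^ k := by rw [← Real.exp_nat_mul]; simp
  rw [this]
  exact pow_le_pow_left₀ (Real.exp_pos _).le Real.exp_one_lt_d9.le _

theorem num1 : (((379/1000:ℝ)⁻¹^8 * (14079/112000:ℝ)⁻¹^8 * (73/125:ℝ)⁻¹^7 / 42^15 / 4^9)) ≤ Real.exp (-39.5) := by
  have h : Real.exp (-40) ≤ Real.exp (-39.5) := Real.exp_le_exp.2 (by norm_num)
  refine le_trans ?_ h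
  have := exp_nat_le 40
  push_cast at this
  rw [Real.exp_neg, le_inv_comm₀ (by positivity) (Real.exp_pos _)]
  refine this.trans ?_
  norm_num

theorem num2 : (((33/100:ℝ)⁻¹^8 * (9897/22400:ℝ)⁻¹^8 * (27/200:ℝ)⁻¹^7 / 42^15 / 4^9)) * Real.exp (-0.4) ≤ Real.exp (-39.5) := by
  have e : Real.exp (-39.5) = Real.exp (-39.1) * Real.exp (-0.4) := by rw [← Real.exp_add]; norm_num
  rw [e]
  refine mul_le_mul_of_nonneg_right ?_ (Real.exp_pos _).le
  have h0 : Real.exp 0.1 ≤ 1/0.9 := by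
    have h3 := Real.add_one_le_exp (-0.1)
    rw [Real.exp_neg] at h3
    rw [le_div_iff₀ (by norm_num)]
    have h4 := Real.exp_pos 0.1
    have := mul_le_mul_of_nonneg_left h3 h4.le
    rw [mul_inv_cancel₀ h4.ne'] at this
    linarith
  have h1 : Real.exp 39.1 ≤ 2.7182818286^39 * (1/0.9) := by
    have : (39.1:ℝ) = (39:ℕ) + 0.1 := by norm_num
    rw [this, Real.exp_add]
    exact mul_le_mul (exp_nat_le 39) h0 (Real.exp_pos _).le (by positivity)
  rw [Real.exp_neg, le_inv_comm₀ (by positivity) (Real.exp_pos _)]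
  refine h1.trans ?_
  norm_num

theorem phi_bound (w : ℝ) (hw : 0 ≤ w) (hw2 : w ≤ 7 + √7) :
    ((w^2 - 14*w + 42) / 42)^8 * (w / 42)^7 * (1 / (4 + w/42))^9 ≤ Real.exp (-39.5) := by
  have s1 := s7_lt
  have s2 := s7_gt
  have hs := s7
  have hq : w^2 - 14*w+42 = (7 - √7 - w) * (7 + √7 - w) := by nlinarith
  by_cases h : w ≤ 7 - √7
  · have := core_bound ((7 - √7 - w) * (7 + √7 - w)) w (379/1000) (14079/112000) (73/125) (4.3543 - w) (9.6458 - w)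
      (by norm_num) (by norm_num) (by norm_num) hw (by linarith) (mul_nonneg (by linarith) (by linarith))
      (mul_le_mul (by linarith) (by linarith) (by linarith) (by linarith)) (by linarith) (by linarith)
    rw [hq]
    refine this.trans (le_trans ?_ num1)
    refine mul_le_of_le_one_right (by positivity) ?_
    rw [Real.exp_le_one_iff]
    ring_nf
    norm_num
  · push Not at h
    have := core_bound ((w - (7 - √7)) * (7 + √7 - w)) w (33/100) (9897/22400) (27/200) (w - 4.3542) (9.6458 - w)
      (by norm_num) (by norm_num) (by norm_num) hw (by linarith) (mul_nonneg (by linarith) (by linarith))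
      (mul_le_mul (by linarith) (by linarith) (by linarith) (by linarith)) (by linarith) (by linarith)
    have e : ((w^2 - 14*w+42)/42)^8 = (((w - (7 - √7)) * (7 + √7 - w))/42)^8 := by rw [hq]; ring
    rw [e]
    refine this.trans (le_trans ?_ num2)
    refine mul_le_mul_of_nonneg_left ?_ (by positivity)
    rw [Real.exp_le_exp]
    ring_nf
    norm_num

noncomputable def phi (y : ℝ) : ℝ :=
  (42 - 350 * (y * (1 - y)) + 729 * (y * (1 - y)) ^ 2) ^ 8 * (1 - 4 * (y * (1 - y))) ^ 7 / (y * (1 - y)) ^ 14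

theorem FF_phi (n : ℕ) (y : ℝ) : FF n y = phi y ^ n / (y * (1 - y)) := by
  unfold FF phi
  generalize y * (1 - y) = r
  rw [div_pow, mul_pow ((42 - 350 * r + 729 * r ^ 2) ^ 8), ← pow_mul, ← pow_mul, ← pow_mul, pow_succ r (14 * n), div_div]

theorem phi_le (y : ℝ) (h1 : Ym ≤ y) (h2 : y ≤ Yp) : phi y ≤ Real.exp (-39.5) := by
  have s1 := s7_lt
  have s2 := s7_gt
  have hs := s7
  unfold Ym at h1
  unfold Yp at h2
  have hr0 : 0 < y * (1 - y) := mul_pos (by linarith) (by linarith)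
  have hrl : (42:ℝ) - 4 * 42 * (y * (1-y)) ≤ (7 + √7) * (y * (1-y)) := by
    have : ((13 - √7)/27) * (1 - (13 - √7)/27) ≤ y * (1 - y) := by nlinarith
    have e : ((13 - √7)/27) * (1 - (13 - √7)/27) = 42 / (175 + √7) := by
      rw [eq_div_iff (by linarith)]
      nlinarith
    rw [e, div_le_iff₀ (by linarith)] at this
    linarith
  have hr4 : y * (1 - y) ≤ 1/4 := by nlinarith [sq_nonneg (1 - 2*y)]
  set r := y * (1 - y) with hr
  have := phi_bound (42 * (1 - 4 * r) / r) (div_nonneg (by linarith) hr0.le) (by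
    rw [div_le_iff₀ hr0]; linarith)
  refine le_trans (le_of_eq ?_) this
  unfold phi
  rw [← hr]
  have hne := hr0.ne'
  have e1 : 1 / (4 + 42 * (1 - 4 * r) / r / 42) = r := by field_simp; ring
  have e2 : ((42 * (1 - 4 * r) / r)^2 - 14 * (42 * (1 - 4 * r) / r) + 42) / 42 = (42 - 350 * r + 729 * r^2) / r^2 := by
    field_simp; ring
  have e3 : (42 * (1 - 4 * r) / r)/42 = (1 - 4 * r) / r := by field_simp
  rw [e1, e2, e3]
  field_simp

theorem phi_nonneg (y : ℝ) (h1 : Ym ≤ y) (h2 : y ≤ Yp) : 0 ≤ phi y := by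
  have : 0 ≤ 1 - 4 * (y * (1 - y)) := by nlinarith [sq_nonneg (1 - 2*y)]
  have := Ym_pos
  have := Yp_lt
  have : 0 < y * (1 - y) := mul_pos (by linarith) (by linarith)
  unfold phi
  have : 0 ≤ (42 - 350 * (y * (1 - y)) + 729 * (y * (1 - y)) ^ 2) ^ 8 := Even.pow_nonneg (by decide) _
  positivity

theorem II_le (n : ℕ) : II n ≤ Real.exp (-39.5 * n) := by
  have a1 := Ym_pos
  have a2 := Yp_lt
  have a3 := Ym_lt_Yp
  have s1 := s7_lt
  have hd : Yp - Ym ≤ 0.2 := by unfold Yp Ym; linarith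
  have h1 : II n ≤ ∫ y in Ym..Yp, Real.exp (-39.5)^n * 5 := by
    unfold II
    apply intervalIntegral.integral_mono_on a3.le (FF_cont n).intervalIntegrable (by simp)
    intro y hy
    rw [FF_phi, div_eq_mul_inv]
    have : 0.2 ≤ y * (1 - y) := by nlinarith [hy.1, hy.2]
    refine mul_le_mul (pow_le_pow_left₀ (phi_nonneg y hy.1 hy.2) (phi_le y hy.1 hy.2) n) ?_ (by positivity) (by positivity)
    rw [inv_le_comm₀ (by linarith) (by norm_num)]
    linarith
  rw [intervalIntegral.integral_const, smul_eq_mul] at h1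
  have e : Real.exp (-39.5)^n = Real.exp (-39.5 * n) := by rw [← Real.exp_nat_mul, mul_comm]
  rw [e] at h1
  have := Real.exp_pos (-39.5 * n)
  nlinarith

end

section

theorem num3 : Real.exp (-39.8) ≤ 0.00927^8 * 0.041616^7 / 0.2396^14 := by
  have h0 : (2.12 : ℝ) ≤ Real.exp 0.8 := by
    have := Real.quadratic_le_exp_of_nonneg (x := 0.8) (by norm_num)
    norm_num at this ⊢
    linarith
  have h1 : (2.7182818283:ℝ)^39 * 2.12 ≤ Real.exp 39.8 := by
    have : (39.8:ℝ) = (39:ℕ) * 1 + 0.8 := by norm_num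
    rw [this, Real.exp_add, Real.exp_nat_mul]
    exact mul_le_mul (pow_le_pow_left₀ (by norm_num) Real.exp_one_gt_d9.le _) h0 (by norm_num) (by positivity)
  rw [Real.exp_neg, inv_le_comm₀ (Real.exp_pos _) (by positivity)]
  refine le_trans ?_ h1
  norm_num

theorem phi_ge (y : ℝ) (h1 : 0.397 ≤ y) (h2 : y ≤ 0.398) : Real.exp (-39.8) ≤ phi y := by
  refine num3.trans ?_
  unfold phi
  have hr1 : 0.239391 ≤ y * (1 - y) := by nlinarith
  have hr2 : y * (1 - y) ≤ 0.239596 := by nlinarith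
  generalize y * (1 - y) = r at *
  have hq : 0.00927 ≤ -(42 - 350 * r + 729 * r^2) := by nlinarith
  have e : (42 - 350 * r + 729 * r^2)^8 = (-(42 - 350 * r + 729 * r^2))^8 := by ring
  rw [e]
  have h3 : 0.041616 ≤ 1 - 4 * r := by linarith
  have h4 : r ≤ 0.2396 := by linarith
  have h5 : 0 < r := by linarith
  have hA := pow_le_pow_left₀ (by norm_num) hq 8
  have hB := pow_le_pow_left₀ (by norm_num) h3 7
  have hC := pow_le_pow_left₀ h5.le h4 14
  exact div_le_div₀ (mul_nonneg (by positivity) (by positivity)) (mul_le_mul hA hB (by positivity) (by positivity)) (by positivity) hC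

theorem II_ge (n : ℕ) : 0.004 * Real.exp (-39.8 * n) ≤ II n := by
  have a1 := Ym_pos
  have a2 := Yp_lt
  have a3 := Ym_lt_Yp
  have s1 := s7_lt
  have s2 := s7_gt
  have b1 : Ym ≤ 0.397 := by unfold Ym; linarith
  have b2 : 0.398 ≤ Yp := by unfold Yp; linarith
  have hI : IntervalIntegrable (FF n) MeasureTheory.volume Ym Yp := (FF_cont n).intervalIntegrable
  have hm : ∫ y in (0.397:ℝ)..0.398, FF n y ≤ II n := by
    unfold II
    refine intervalIntegral.integral_mono_interval b1 (by norm_num) b2 ?_ hI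
    refine (MeasureTheory.ae_restrict_iff' measurableSet_Ioc).2 (Filter.Eventually.of_forall fun y hy => ?_)
    have := phi_nonneg y hy.1.le hy.2
    have h0 : 0 < y * (1 - y) := mul_pos (by linarith [hy.1]) (by linarith [hy.2])
    simp only [Pi.zero_apply]
    rw [FF_phi]
    positivity
  refine le_trans ?_ hm
  have h1 : ∫ y in (0.397:ℝ)..0.398, Real.exp (-39.8)^n * 4 ≤ ∫ y in (0.397:ℝ)..0.398, FF n y := by
    apply intervalIntegral.integral_mono_on (by norm_num) (by simp)
    · refine hI.mono_set ?_
      rw [Set.uIcc_of_le (by norm_num), Set.uIcc_of_le a3.le]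
      exact Set.Icc_subset_Icc b1 b2
    · intro y hy
      rw [FF_phi, div_eq_mul_inv]
      have h0 : 0 < y * (1 - y) := mul_pos (by linarith [hy.1]) (by linarith [hy.2])
      have hr4 : y * (1 - y) ≤ 1/4 := by nlinarith [sq_nonneg (1 - 2*y)]
      have hp := phi_ge y hy.1 hy.2
      refine mul_le_mul (pow_le_pow_left₀ (Real.exp_pos _).le hp n) ?_ (by norm_num) (pow_nonneg ((Real.exp_pos _).le.trans hp) _)
      rw [le_inv_comm₀ (by norm_num) h0]
      linarith
  refine le_trans (le_of_eq ?_) h1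
  rw [intervalIntegral.integral_const, smul_eq_mul]
  have e : Real.exp (-39.8)^n = Real.exp (-39.8 * n) := by rw [← Real.exp_nat_mul, mul_comm]
  rw [e]
  ring

end

section

open Filter Topology in
theorem Dn_bound : ∀ᶠ n : ℕ in atTop, (Dn n : ℝ) ≤ Real.exp (23.62 * n) := by
  have hn : Tendsto (fun n : ℕ => (n : ℝ)) atTop atTop := tendsto_natCast_atTop_atTop
  have h1 := (pnt_psi.comp (hn.const_mul_atTop (show (0:ℝ) < 18 by norm_num))).eventually (gt_mem_nhds (show (1:ℝ) < 1.0008 by norm_num))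
  have h2 := (pnt_theta.comp (hn.const_mul_atTop (show (0:ℝ) < 8 by norm_num))).eventually (lt_mem_nhds (show (0.9992:ℝ) < 1 by norm_num))
  have h3 := (pnt_theta.comp (hn.const_mul_atTop (show (0:ℝ) < 7 by norm_num))).eventually (gt_mem_nhds (show (1:ℝ) < 1.0008 by norm_num))
  filter_upwards [h1, h2, h3, eventually_ge_atTop 1] with n h1 h2 h3 hn1
  have hn0 : (0:ℝ) < n := by exact_mod_cast hn1
  simp only [Function.comp] at h1 h2 h3
  rw [div_lt_iff₀ (by positivity)] at h1 h3
  rw [lt_div_iff₀ (by positivity)] at h2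
  have hth : Chebyshev.theta (8 * n) = Chebyshev.theta (7 * n) + Real.log (PP n) := by
    have e8 : ⌊(8 * n : ℝ)⌋₊ = 8 * n := by exact_mod_cast Nat.floor_natCast (R := ℝ) (8 * n)
    have e7 : ⌊(7 * n : ℝ)⌋₊ = 7 * n := by exact_mod_cast Nat.floor_natCast (R := ℝ) (7 * n)
    unfold Chebyshev.theta PP
    rw [e8, e7, Nat.cast_prod, Real.log_prod]
    · rw [← Finset.sum_union]
      · rw [← Finset.filter_union, Finset.Ioc_union_Ioc_eq_Ioc (by omega) (by omega)]
      · apply Finset.disjoint_filter_filter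
        rw [Finset.disjoint_left]
        intro x; simp; omega
    · intro x hx
      have := (Finset.mem_filter.1 hx).2.pos
      positivity
  have hL := LP_mul n
  have hl0 : Nat.lcmUpto (18 * n) ≠ 0 := Nat.lcmUpto_ne_zero _
  have hLP : LP n ≠ 0 := by intro h; rw [h, zero_mul] at hL; exact hl0 hL.symm
  have hPP : PP n ≠ 0 := by intro h; rw [h, mul_zero] at hL; exact hl0 hL.symm
  have hps : Chebyshev.psi (18 * n) = Real.log (LP n) + Real.log (PP n) := by
    have := Chebyshev.psi_eq_log_lcmUpto (18 * n)
    rw [← hL] at this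
    push_cast at this
    rw [this, Real.log_mul (by exact_mod_cast hLP) (by exact_mod_cast hPP)]
  have hl3 := Real.log_three_lt_d9
  have hD : Real.log (Dn n) = Real.log (LP n) + 6 * n * Real.log 3 := by
    unfold Dn
    push_cast
    rw [Real.log_mul (by exact_mod_cast hLP) (by positivity), Real.log_pow]
    push_cast; ring
  have hDp : (0:ℝ) < Dn n := by
    unfold Dn; push_cast
    have : (0:ℝ) < LP n := by exact_mod_cast Nat.pos_of_ne_zero hLP
    positivity
  rw [← Real.log_le_iff_le_exp hDp, hD]
  nlinarith

theorem Dn_pos (n : ℕ) : (0:ℝ) < Dn n := by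
  have hL := LP_mul n
  have hl0 : Nat.lcmUpto (18 * n) ≠ 0 := Nat.lcmUpto_ne_zero _
  have hLP : LP n ≠ 0 := by intro h; rw [h, zero_mul] at hL; exact hl0 hL.symm
  unfold Dn; push_cast
  have : (0:ℝ) < LP n := by exact_mod_cast Nat.pos_of_ne_zero hLP
  positivity

theorem g1_exp (n : ℕ) : |(gg n 1 : ℝ)| ≤ Real.exp (65.61 * n) := by
  refine (g1_bound n).trans ?_
  rw [mul_comm (65.61:ℝ), Real.exp_nat_mul]
  refine pow_le_pow_left₀ (by norm_num) ?_ n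
  have h0 : (1.796 : ℝ) ≤ Real.exp 0.61 := by
    have := Real.quadratic_le_exp_of_nonneg (x := 0.61) (by norm_num)
    norm_num at this ⊢
    linarith
  have h1 : (2.7182818283:ℝ)^65 * 1.796 ≤ Real.exp 65.61 := by
    have : (65.61:ℝ) = (65:ℕ) * 1 + 0.61 := by norm_num
    rw [this, Real.exp_add, Real.exp_nat_mul]
    exact mul_le_mul (pow_le_pow_left₀ (by norm_num) Real.exp_one_gt_d9.le _) h0 (by norm_num) (by positivity)
  refine le_trans ?_ h1
  norm_num

open Filter in
theorem small_const (c d : ℝ) (hc : 0 < c) (hd : 0 < d) : ∀ᶠ n : ℕ in atTop, c ≤ Real.exp (d * n) := by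
  have hn : Tendsto (fun n : ℕ => Real.exp (d * n)) atTop atTop :=
    Real.tendsto_exp_atTop.comp (tendsto_natCast_atTop_atTop.const_mul_atTop hd)
  exact hn.eventually_ge_atTop c

/-- summary of the approximating forms -/
theorem forms : ∃ n0 : ℕ, ∀ n ≥ n0, ∃ A B : ℤ, ∃ ε : ℝ, ε = A - B * al ∧ 0 < ε ∧
    ε ≤ Real.exp (-15.87 * n) ∧ |(B : ℝ)| ≤ Real.exp (89.23 * n) ∧
    |(B : ℝ)| * Real.exp (-105.42 * n) ≤ ε := by
  have hev := (Dn_bound.and ((small_const (√7) 0.01 (by positivity) (by norm_num)).and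
    (small_const (1 / (√7 * 0.004)) 0.01 (by positivity) (by norm_num)))).and (Filter.eventually_ge_atTop 1)
  obtain ⟨n0, h⟩ := Filter.eventually_atTop.1 hev
  refine ⟨n0, fun n hn => ?_⟩
  obtain ⟨⟨hD, h7, h8⟩, h1⟩ := h n hn
  obtain ⟨A, hA⟩ := form_int n h1
  have hDp := Dn_pos n
  have s0 : 0 < √(7:ℝ) := by positivity
  have hIl := II_ge n
  have hIu := II_le n
  have hIp : 0 < II n := lt_of_lt_of_le (by positivity) hIl
  have hg := g1_exp n
  refine ⟨A, Dn n * gg n 1, Dn n * (√7 * II n), ?_, by positivity, ?_, ?_, ?_⟩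
  · push_cast; exact hA
  · have e : Real.exp (-15.87 * n) = Real.exp (23.62 * n) * (Real.exp (0.01 * n) * Real.exp (-39.5 * n)) := by
      rw [← Real.exp_add, ← Real.exp_add]; congr 1; ring
    rw [e]
    gcongr
  · push_cast
    rw [abs_mul, abs_of_pos hDp]
    have e : Real.exp (89.23 * n) = Real.exp (23.62 * n) * Real.exp (65.61 * n) := by
      rw [← Real.exp_add]; congr 1; ring
    rw [e]
    gcongr
  · push_cast
    rw [abs_mul, abs_of_pos hDp, mul_assoc]
    refine mul_le_mul_of_nonneg_left ?_ hDp.le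
    have e : Real.exp (-39.81 * n) = Real.exp (65.61 * n) * Real.exp (-105.42 * n) := by
      rw [← Real.exp_add]; congr 1; ring
    calc |(gg n 1 : ℝ)| * Real.exp (-105.42 * n) ≤ Real.exp (65.61 * n) * Real.exp (-105.42 * n) := by gcongr
      _ = Real.exp (-39.81 * n) := e.symm
      _ ≤ √7 * (0.004 * Real.exp (-39.8 * n)) := by
        have e2 : Real.exp (-39.8 * n) = Real.exp (0.01 * n) * Real.exp (-39.81 * n) := by
          rw [← Real.exp_add]; congr 1; ring
        rw [div_le_iff₀ (by positivity)] at h8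
        rw [e2]
        nlinarith [Real.exp_pos (-39.81 * n)]
      _ ≤ √7 * II n := by gcongr

end

section

theorem large_q : ∃ T : ℝ, ∀ q : ℕ, 1 ≤ q → T ≤ Real.log q → ∀ p : ℤ, ∀ κ : ℝ, 6.64611 < κ →
    ¬ (|al - (p : ℝ) / (q : ℝ)| < (q : ℝ) ^ (-κ)) := by
  obtain ⟨n0, hf⟩ := forms
  refine ⟨max 100000 (15.87 * n0), fun q hq hT p κ hκ hlt => ?_⟩
  have hT1 := (le_max_left _ _).trans hT
  have hT2 := (le_max_right _ _).trans hT
  have hq0 : (0:ℝ) < q := by exact_mod_cast hq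
  set L := Real.log q with hL
  have hqe : (q : ℝ) = Real.exp L := (Real.exp_log hq0).symm
  have hl2 := Real.log_two_lt_d9
  have hl2' := Real.log_two_gt_d9
  set n := ⌈(L + Real.log 2) / 15.87⌉₊ with hn
  have n1 : (L + Real.log 2) / 15.87 ≤ n := Nat.le_ceil _
  have n2 : (n : ℝ) < (L + Real.log 2) / 15.87 + 1 := Nat.ceil_lt_add_one (by apply div_nonneg <;> linarith)
  rw [div_le_iff₀ (by norm_num)] at n1
  have n2' : 15.87 * (n : ℝ) < L + Real.log 2 + 15.87 := by
    have := mul_lt_mul_of_pos_left n2 (show (0:ℝ) < 15.87 by norm_num)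
    rw [mul_add, mul_div_cancel₀ _ (by norm_num)] at this
    linarith
  have hnn : n0 ≤ n := by
    have : (n0 : ℝ) ≤ n := by linarith
    exact_mod_cast this
  obtain ⟨A, B, ε, he, hε, hε1, hB, hε2⟩ := hf n hnn
  have hqk : (q : ℝ) ^ (-κ) = Real.exp (-κ * L) := by
    rw [Real.rpow_def_of_pos hq0, mul_comm]
  rw [hqk] at hlt
  have key : q * (B * (al - p / q)) = ((q * A - B * p : ℤ) : ℝ) - q * ε := by
    rw [he]; push_cast; field_simp; ring
  by_cases hN : (q * A - B * p : ℤ) = 0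
  · rw [hN] at key
    have k2 : B * (al - p / q) = - ε := by
      have : (q:ℝ) * (B * (al - p / q)) = q * (-ε) := by rw [key]; push_cast; ring
      exact mul_left_cancel₀ hq0.ne' this
    have hB0 : 0 < |(B:ℝ)| := by
      rw [abs_pos]; intro h; rw [h, zero_mul] at k2; linarith
    have k3 : |(B:ℝ)| * |al - p / q| = ε := by
      rw [← abs_mul, k2, abs_neg, abs_of_pos hε]
    rw [← k3] at hε2
    have k4 := (le_of_mul_le_mul_left hε2 hB0).trans_lt hlt
    rw [Real.exp_lt_exp] at k4
    nlinarith
  · have hN1 : (1:ℝ) ≤ |((q * A - B * p : ℤ) : ℝ)| := by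
      exact_mod_cast Int.one_le_abs hN
    have hqε : q * ε ≤ 1/2 := by
      have : q * ε ≤ Real.exp L * Real.exp (-15.87 * n) := by rw [hqe]; gcongr
      refine this.trans ?_
      rw [← Real.exp_add]
      have e : (1/2:ℝ) = Real.exp (-Real.log 2) := by rw [Real.exp_neg, Real.exp_log (by norm_num)]; norm_num
      rw [e, Real.exp_le_exp]
      linarith
    have h1 : (1/2:ℝ) ≤ |q * (B * (al - p / q))| := by
      rw [key]
      have := abs_sub_abs_le_abs_sub ((q * A - B * p : ℤ) : ℝ) (q * ε)
      rw [abs_of_pos (mul_pos hq0 hε)] at this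
      linarith
    have h2 : |q * (B * (al - p / q))| ≤ Real.exp L * (Real.exp (89.23 * n) * Real.exp (-κ * L)) := by
      rw [abs_mul, abs_mul, abs_of_pos hq0, ← hqe]
      gcongr
    have h3 := h1.trans h2
    rw [← Real.exp_add, ← Real.exp_add] at h3
    have e : (1/2:ℝ) = Real.exp (-Real.log 2) := by rw [Real.exp_neg, Real.exp_log (by norm_num)]; norm_num
    rw [e, Real.exp_le_exp] at h3
    nlinarith

theorem irrationality_measure_alpha_0' : ∀ κ : ℝ, κ > 6.64611 → {pq : ℤ × ℕ+ | |Real.sqrt 7 * Real.log ((Real.sqrt 7 - 1) / (Real.sqrt 7 + 1)) - (pq.1 : ℝ) / ((pq.2 : ℕ) : ℝ)| < ((pq.2 : ℕ) : ℝ) ^ (-κ)}.Finite := by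
  intro κ hκ
  obtain ⟨T, hT⟩ := large_q
  set Q : ℕ := ⌈Real.exp T⌉₊ + 1
  set M : ℤ := ⌈(Q : ℝ) * (|al| + 1)⌉
  have hfin : ((Set.Icc (-M) M) ×ˢ (Set.Icc (1:ℕ+) ⟨Q, Nat.succ_pos _⟩)).Finite :=
    (Set.finite_Icc _ _).prod (Set.finite_Icc _ _)
  refine hfin.subset ?_
  rintro ⟨p, q⟩ h
  replace h : |al - (p : ℝ) / ((q : ℕ) : ℝ)| < ((q : ℕ) : ℝ) ^ (-κ) := h
  have hq1 : 1 ≤ (q : ℕ) := q.pos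
  have hq0 : (0:ℝ) < ((q : ℕ) : ℝ) := by exact_mod_cast hq1
  have hqQ : (q : ℕ) ≤ Q := by
    have h1 : ¬ T ≤ Real.log ((q : ℕ) : ℝ) := fun h2 => hT q hq1 h2 p κ hκ h
    push Not at h1
    rw [Real.log_lt_iff_lt_exp hq0] at h1
    have h3 := h1.trans_le (Nat.le_ceil _)
    have : (q : ℕ) < ⌈Real.exp T⌉₊ := by exact_mod_cast h3
    omega
  have hle1 : ((q : ℕ) : ℝ) ^ (-κ) ≤ 1 :=
    Real.rpow_le_one_of_one_le_of_nonpos (by exact_mod_cast hq1) (by linarith)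
  have hpq : |(p : ℝ) / ((q : ℕ) : ℝ)| ≤ |al| + 1 := by
    have := abs_sub_abs_le_abs_sub ((p : ℝ) / ((q : ℕ) : ℝ)) al
    rw [abs_sub_comm] at this
    linarith
  rw [abs_div, abs_of_pos hq0, div_le_iff₀ hq0] at hpq
  have hpM : |(p:ℝ)| ≤ M := by
    refine hpq.trans (le_trans ?_ (Int.le_ceil _))
    rw [mul_comm]
    have : ((q : ℕ) : ℝ) ≤ Q := by exact_mod_cast hqQ
    gcongr
  have hpM' : |p| ≤ M := by exact_mod_cast hpM
  rw [abs_le] at hpM'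
  refine Set.mem_prod.2 ⟨hpM', ?_, ?_⟩
  · exact q.one_le
  · exact hqQ

end


theorem irrationality_measure_alpha_0 :
    ∀ κ : ℝ, κ > 6.64611 →
      {pq : ℤ × ℕ+ |
        |Real.sqrt 7 * Real.log ((Real.sqrt 7 - 1) / (Real.sqrt 7 + 1)) -
            (pq.1 : ℝ) / ((pq.2 : ℕ) : ℝ)| <
          ((pq.2 : ℕ) : ℝ) ^ (-κ)}.Finite := by
  exact irrationality_measure_alpha_0'
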